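/- arXiv:2108.10214 — 10 statements merged into one kernel-verified Lean document; each statement's English description precedes it below -/
import Mathlib

section
/- Let ρ > 1 be real, n ≥ 1 an integer, and μ₁, …, μₙ ∈ ℂ with |μᵢ| < ρ for all i. Let W_ρ^{≥0} denote the set of coefficient sequences h : ℕ → ℂ with ∑ₖ |hₖ| ρᵏ < ∞, each defining a holomorphic function h(λ) = ∑ₖ hₖ λᵏ on the open disk D(0,ρ). Then for every h ∈ W_ρ^{≥0} there exist unique (a₀, …, a_{n−1}) ∈ ℂⁿ and a unique g ∈ W_ρ^{≥0} such that h(λ) = ∑_{k=0}^{n−1} aₖ λᵏ + g(λ) ∏_{i=1}^{n} (λ − μᵢ) for all λ ∈ D(0,ρ); that is, the map (a₀, …, a_{n−1}, g) ↦ ∑_{k=0}^{n−1} aₖ λᵏ + g(λ) ∏_{i=1}^{n} (λ − μᵢ) is a bijection from ℂⁿ × W_ρ^{≥0} onto W_ρ^{≥0}. -/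
open Polynomial in
lemma uniq_aux (ρ : ℝ) (n : ℕ) : ∀ (μ : Fin n → ℂ) (_ : ∀ i, ‖μ i‖ < ρ) (P : ℂ[X])
    (_ : P.degree < n) (G : ℂ → ℂ) (_ : ContinuousOn G (Metric.ball 0 ρ))
    (_ : ∀ z ∈ Metric.ball (0:ℂ) ρ, P.eval z + G z * ∏ i, (z - μ i) = 0),
    P = 0 ∧ ∀ z ∈ Metric.ball (0:ℂ) ρ, G z = 0 := by
  induction n with
  | zero =>
    intro μ hμ P hP G hG h
    have : P = 0 := by
      rw [← Polynomial.degree_eq_bot]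
      by_contra hne
      exact absurd (Polynomial.zero_le_degree_iff.2 (by simpa using hne)) (not_le.2 (by simpa using hP))
    subst this
    refine ⟨rfl, fun z hz => by simpa using h z hz⟩
  | succ n ih =>
    intro μ hμ P hP G hG h
    have hm : μ 0 ∈ Metric.ball (0:ℂ) ρ := by simpa using hμ 0
    have h0 : P.eval (μ 0) = 0 := by
      have := h (μ 0) hm
      simpa [Fin.prod_univ_succ] using this
    obtain ⟨Q, rfl⟩ := Polynomial.dvd_iff_isRoot.2 h0
    have hQ : Q.degree < n := by
      by_cases hQ0 : Q = 0
      · subst hQ0; simp [bot_lt_iff_ne_bot]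
      · rw [Polynomial.degree_mul, Polynomial.degree_X_sub_C,
          Polynomial.degree_eq_natDegree hQ0] at hP
        rw [Polynomial.degree_eq_natDegree hQ0]
        norm_cast at hP ⊢
        omega
    have hne : ∀ z ∈ Metric.ball (0:ℂ) ρ, z ≠ μ 0 →
        Q.eval z + G z * ∏ i : Fin n, (z - μ i.succ) = 0 := by
      intro z hz hzne
      have := h z hz
      rw [Fin.prod_univ_succ] at this
      simp only [eval_mul, eval_sub, eval_X, eval_C] at this
      have h2 : (z - μ 0) * (Q.eval z + G z * ∏ i : Fin n, (z - μ i.succ)) = 0 := by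
        rw [← this]; ring
      exact (mul_eq_zero.1 h2).resolve_left (sub_ne_zero.2 hzne)
    have hall : ∀ z ∈ Metric.ball (0:ℂ) ρ,
        Q.eval z + G z * ∏ i : Fin n, (z - μ i.succ) = 0 := by
      intro z hz
      by_cases hzne : z = μ 0
      · subst hzne
        have hc : ContinuousAt (fun z => Q.eval z + G z * ∏ i : Fin n, (z - μ i.succ)) (μ 0) := by
          have := hG.continuousAt (Metric.isOpen_ball.mem_nhds hm)
          fun_prop
        have h1 := hc.tendsto.mono_left (nhdsWithin_le_nhds (s := {μ 0}ᶜ))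
        refine tendsto_nhds_unique h1 (tendsto_const_nhds.congr' ?_)
        filter_upwards [self_mem_nhdsWithin,
          mem_nhdsWithin_of_mem_nhds (Metric.isOpen_ball.mem_nhds hm)] with z hz1 hz2
        exact (hne z hz2 hz1).symm
      · exact hne z hz hzne
    obtain ⟨h1, h2⟩ := ih (fun i => μ i.succ) (fun i => hμ _) Q hQ G hG hall
    exact ⟨by simp [h1], h2⟩

lemma summ_aux {ρ : ℝ} {h : ℕ → ℂ} (hh : Summable (fun k => ‖h k‖ * ρ ^ k))
    {z : ℂ} (hz : ‖z‖ ≤ ρ) : Summable (fun k => h k * z ^ k) := by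
  refine Summable.of_norm_bounded hh fun k => ?_
  rw [norm_mul, norm_pow]
  gcongr

lemma cont_aux {ρ : ℝ} {h : ℕ → ℂ} (hh : Summable (fun k => ‖h k‖ * ρ ^ k)) :
    ContinuousOn (fun z : ℂ => ∑' k, h k * z ^ k) (Metric.ball 0 ρ) := by
  refine continuousOn_tsum (fun k => by fun_prop) hh fun k z hz => ?_
  have hz : ‖z‖ < ρ := by simpa using hz
  rw [norm_mul, norm_pow]
  gcongr

lemma coeff_aux {ρ : ℝ} (hρ : 0 < ρ) {h : ℕ → ℂ} (hh : Summable (fun k => ‖h k‖ * ρ ^ k))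
    (h0 : ∀ z ∈ Metric.ball (0:ℂ) ρ, ∑' k, h k * z ^ k = 0) : h = 0 := by
  have key : HasFPowerSeriesAt (0 : ℂ → ℂ) (FormalMultilinearSeries.ofScalars ℂ h) 0 := by
    rw [hasFPowerSeriesAt_iff]
    filter_upwards [Metric.ball_mem_nhds (0:ℂ) hρ] with z hz
    have := (summ_aux hh (z := z) (by simpa using (mem_ball_zero_iff.1 hz).le)).hasSum
    rw [h0 z hz] at this
    simpa [FormalMultilinearSeries.coeff_ofScalars, mul_comm] using this
  have := key.eq_zero
  funext k
  have h2 := congrArg (fun p => FormalMultilinearSeries.coeff p k) this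
  simp only [FormalMultilinearSeries.coeff_ofScalars] at h2
  rw [h2]
  rfl

lemma div_aux {ρ : ℝ} (hρ : 0 < ρ) {h : ℕ → ℂ} (hh : Summable (fun k => ‖h k‖ * ρ ^ k))
    {m : ℂ} (hm : ‖m‖ < ρ) : ∃ g : ℕ → ℂ, Summable (fun k => ‖g k‖ * ρ ^ k) ∧
      ∃ c : ℂ, ∀ z : ℂ, ‖z‖ < ρ → ∑' k, h k * z ^ k = c + (∑' k, g k * z ^ k) * (z - m) := by
  have hH : Summable (fun k => ‖h (k+1)‖ * ρ ^ k) := by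
    have := ((summable_nat_add_iff 1).2 hh).mul_right ρ⁻¹
    refine this.congr fun k => ?_
    field_simp
    ring
  set C := ∑' k, ‖h (k+1)‖ * ρ ^ k with hC
  have hr0 : 0 ≤ ‖m‖ / ρ := by positivity
  have hr1 : ‖m‖ / ρ < 1 := (div_lt_one hρ).2 hm
  -- double family
  have hD : Summable (fun p : ℕ × ℕ => ‖h (p.2 + p.1 + 1)‖ * ρ ^ p.2 * ‖m‖ ^ p.1) := by
    have hrow : ∀ j, Summable (fun k => ‖h (k + j + 1)‖ * ρ ^ (k + j)) := fun j =>
      (summable_nat_add_iff j).2 hH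
    have heq : ∀ j k, ‖h (k + j + 1)‖ * ρ ^ k * ‖m‖ ^ j
        = ‖h (k + j + 1)‖ * ρ ^ (k + j) * (‖m‖ / ρ) ^ j := by
      intro j k
      rw [div_pow, pow_add]; field_simp
    rw [summable_prod_of_nonneg (fun p => by positivity)]
    simp only [heq]
    refine ⟨fun j => (hrow j).mul_right _, ?_⟩
    simp only [tsum_mul_right]
    refine Summable.of_nonneg_of_le (fun j => mul_nonneg (tsum_nonneg fun k => by positivity)
      (by positivity)) (fun j => ?_) ((summable_geometric_of_lt_one hr0 hr1).mul_left C)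
    gcongr
    have := hH.sum_add_tsum_nat_add j
    rw [hC, ← this]
    exact le_add_of_nonneg_left (Finset.sum_nonneg fun k _ => by positivity)
  have hD' : Summable (fun p : ℕ × ℕ => ‖h (p.1 + p.2 + 1)‖ * ρ ^ p.1 * ‖m‖ ^ p.2) :=
    hD.prod_symm
  have hcol : ∀ k, Summable (fun j => ‖h (k + j + 1) * m ^ j‖) := by
    intro k
    have := (hD'.prod_factor k).mul_right (ρ ^ k)⁻¹
    refine this.congr fun j => ?_
    simp only [norm_mul, norm_pow]
    field_simp
  let g : ℕ → ℂ := fun k => ∑' j, h (k + j + 1) * m ^ j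
  have hg : Summable (fun k => ‖g k‖ * ρ ^ k) := by
    refine Summable.of_nonneg_of_le (fun k => by positivity) (fun k => ?_) hD'.prod
    have h1 : ‖g k‖ ≤ ∑' j, ‖h (k + j + 1) * m ^ j‖ := norm_tsum_le_tsum_norm (hcol k)
    calc ‖g k‖ * ρ ^ k ≤ (∑' j, ‖h (k + j + 1) * m ^ j‖) * ρ ^ k := by gcongr
      _ = _ := by
        rw [← tsum_mul_right]
        refine tsum_congr fun j => ?_
        simp only [norm_mul, norm_pow]; ring
  have hrec : ∀ k, g k = h (k+1) + m * g (k+1) := by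
    intro k
    have h1 := (hcol k).of_norm.tsum_eq_zero_add
    change g k = _ at h1
    rw [h1]
    simp only [g]
    rw [← tsum_mul_left]
    congr 1
    · simp
    · refine tsum_congr fun j => ?_
      rw [show k + (j+1) + 1 = k + 1 + j + 1 by ring]; ring
  refine ⟨g, hg, h 0 + m * g 0, fun z hz => ?_⟩
  have s1 := summ_aux hh hz.le
  have s2 := summ_aux hg hz.le
  have e1 := s1.tsum_eq_zero_add
  have e2 := s2.tsum_eq_zero_add
  have s1' := (summable_nat_add_iff 1).2 s1
  have s2' := (summable_nat_add_iff 1).2 s2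
  have e3 : (∑' k, g k * z ^ k) * z = (∑' k, h (k+1) * z^(k+1)) + m * ∑' k, g (k+1) * z^(k+1) := by
    rw [← tsum_mul_right, ← tsum_mul_left, ← s1'.tsum_add (s2'.mul_left m)]
    refine tsum_congr fun k => ?_
    conv_lhs => rw [hrec k]
    ring
  rw [e1, mul_sub, e3]
  rw [e2]
  simp only [pow_zero, mul_one]
  ring

open Polynomial in
lemma exist_aux (ρ : ℝ) (hρ : 0 < ρ) (n : ℕ) : ∀ (μ : Fin n → ℂ) (_ : ∀ i, ‖μ i‖ < ρ)
    (h : ℕ → ℂ) (_ : Summable (fun k => ‖h k‖ * ρ ^ k)),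
    ∃ P : ℂ[X], P.degree < n ∧ ∃ g : ℕ → ℂ, Summable (fun k => ‖g k‖ * ρ ^ k) ∧
      ∀ z : ℂ, ‖z‖ < ρ → ∑' k, h k * z ^ k =
        P.eval z + (∑' k, g k * z ^ k) * ∏ i, (z - μ i) := by
  induction n with
  | zero =>
    intro μ hμ h hh
    exact ⟨0, by simp, h, hh, by simp⟩
  | succ n ih =>
    intro μ hμ h hh
    obtain ⟨g, hg, c, hc⟩ := div_aux hρ hh (hμ 0)
    obtain ⟨P, hP, g', hg', hz⟩ := ih (fun i => μ i.succ) (fun i => hμ _) g hg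
    refine ⟨C c + P * (X - C (μ 0)), ?_, g', hg', fun z hzρ => ?_⟩
    · refine lt_of_le_of_lt (degree_add_le _ _) (max_lt ?_ ?_)
      · exact lt_of_le_of_lt degree_C_le (by norm_cast; omega)
      · by_cases hP0 : P = 0
        · subst hP0; simp [bot_lt_iff_ne_bot]
        · rw [degree_mul, degree_X_sub_C, degree_eq_natDegree hP0]
          rw [degree_eq_natDegree hP0] at hP
          norm_cast at hP ⊢
          omega
    · rw [hc z hzρ, hz z hzρ, Fin.prod_univ_succ]
      simp only [eval_add, eval_mul, eval_sub, eval_X, eval_C]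
      ring


/- STATEMENT 0: Decomposition of functions in `W_ρ^{≥0}` along the polynomial
`∏ (λ - μᵢ)`: for every `h` with `∑ ‖hₖ‖ ρᵏ < ∞` there exist unique coefficients
`a₀, …, a_{n-1}` and a unique `g ∈ W_ρ^{≥0}` with
`h(λ) = ∑_{k<n} aₖ λᵏ + g(λ) ∏ᵢ (λ - μᵢ)` on the disk `D(0,ρ)`. -/
theorem stmt_0 (ρ : ℝ) (hρ : 1 < ρ) (n : ℕ) (hn : 1 ≤ n)
    (μ : Fin n → ℂ) (hμ : ∀ i, ‖μ i‖ < ρ)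
    (h : ℕ → ℂ) (hh : Summable (fun k => ‖h k‖ * ρ ^ k)) :
    ∃! ag : (Fin n → ℂ) × {g : ℕ → ℂ // Summable (fun k => ‖g k‖ * ρ ^ k)},
      ∀ lam : ℂ, ‖lam‖ < ρ →
        (∑' k : ℕ, h k * lam ^ k) =
          (∑ k : Fin n, ag.1 k * lam ^ (k : ℕ)) +
            (∑' k : ℕ, ag.2.1 k * lam ^ k) * ∏ i : Fin n, (lam - μ i) := by
  have hρ0 : 0 < ρ := by linarith
  obtain ⟨P, hP, g, hg, hPg⟩ := exist_aux ρ hρ0 n μ hμ h hh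
  have hnd : P.natDegree < n := by
    by_cases hP0 : P = 0
    · subst hP0; simp; omega
    · exact (Polynomial.natDegree_lt_iff_degree_lt hP0).2 hP
  have hPe : ∀ z, P.eval z = ∑ k : Fin n, P.coeff k * z ^ (k : ℕ) := by
    intro z
    rw [Polynomial.eval_eq_sum_range' hnd,
      Finset.sum_range]
  refine ⟨(fun k => P.coeff k, ⟨g, hg⟩), fun z hz => ?_, ?_⟩
  · rw [hPg z hz, hPe]
  rintro ⟨a, g', hg'⟩ h'
  simp only at h'
  let Q : Polynomial ℂ := ∑ k : Fin n, Polynomial.C (a k) * Polynomial.X ^ (k : ℕ)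
  have hQ : Q.degree < n := Polynomial.degree_sum_fin_lt a
  have hd : Summable (fun k => ‖g' k - g k‖ * ρ ^ k) := by
    refine Summable.of_nonneg_of_le (fun k => by positivity) (fun k => ?_) (hg'.add hg)
    rw [← add_mul]
    gcongr
    exact norm_sub_le _ _
  obtain ⟨h1, h2⟩ := uniq_aux ρ n μ hμ (Q - P)
    (lt_of_le_of_lt (Polynomial.degree_sub_le _ _) (max_lt hQ hP))
    (fun z => ∑' k, (g' k - g k) * z ^ k) (cont_aux hd) (by
      intro z hz
      have hz : ‖z‖ < ρ := by simpa using hz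
      have e1 := h' z hz
      rw [hPg z hz] at e1
      have e2 : ∑' k, (g' k - g k) * z ^ k = ∑' k, g' k * z ^ k - ∑' k, g k * z ^ k := by
        rw [← (summ_aux hg' hz.le).tsum_sub (summ_aux hg hz.le)]
        exact tsum_congr fun k => by ring
      have e3 : Q.eval z = ∑ k : Fin n, a k * z ^ (k : ℕ) := by
        simp [Q, Polynomial.eval_finsetSum]
      simp only [e2, Polynomial.eval_sub, e3]
      linear_combination -e1)
  have h3 := coeff_aux hρ0 hd h2
  have h4 : g' = g := by
    funext k
    exact sub_eq_zero.1 (congrFun h3 k)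
  have h5 : a = fun k : Fin n => P.coeff k := by
    funext k
    rw [← sub_eq_zero.1 h1]
    simp [Q, Polynomial.coeff_X_pow, Fin.val_inj]
  subst h4
  rw [h5]
end

section
/- Let ρ > 1 be real, let h : ℕ → ℂ satisfy ∑ₖ |hₖ| ρᵏ < ∞, and let μ ∈ ℂ with |μ| < ρ. Define gⱼ = ∑_{k=j+1}^{∞} hₖ μ^{k−1−j} for j ∈ ℕ. Then (i) ∑ⱼ |gⱼ| ρʲ ≤ (∑ₖ |hₖ| ρᵏ) / (ρ − |μ|), and (ii) for every λ ∈ ℂ with |λ| < ρ and λ ≠ μ, one has ∑ⱼ gⱼ λʲ = (h(λ) − h(μ)) / (λ − μ), where h(λ) = ∑ₖ hₖ λᵏ. -/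
/- STATEMENT 1: For `h` with `∑ ‖hₖ‖ ρᵏ < ∞` and `‖μ‖ < ρ`, the sequence
`gⱼ = ∑_{k=j+1}^∞ hₖ μ^{k-1-j}` satisfies
(i) `∑ⱼ ‖gⱼ‖ ρʲ ≤ (∑ₖ ‖hₖ‖ ρᵏ)/(ρ - ‖μ‖)` (in particular it is summable), and
(ii) `∑ⱼ gⱼ λʲ = (h(λ) - h(μ))/(λ - μ)` for `‖λ‖ < ρ`, `λ ≠ μ`. -/
set_option maxHeartbeats 1000000 in
theorem stmt_1 (ρ : ℝ) (hρ : 1 < ρ) (h : ℕ → ℂ)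
    (hh : Summable (fun k => ‖h k‖ * ρ ^ k))
    (μ : ℂ) (hμ : ‖μ‖ < ρ)
    (g : ℕ → ℂ) (hg : ∀ j : ℕ, g j = ∑' k : ℕ, h (j + 1 + k) * μ ^ k) :
    (Summable (fun j => ‖g j‖ * ρ ^ j) ∧
      (∑' j : ℕ, ‖g j‖ * ρ ^ j) ≤ (∑' k : ℕ, ‖h k‖ * ρ ^ k) / (ρ - ‖μ‖)) ∧
    ∀ lam : ℂ, ‖lam‖ < ρ → lam ≠ μ →
      (∑' j : ℕ, g j * lam ^ j) =
        ((∑' k : ℕ, h k * lam ^ k) - (∑' k : ℕ, h k * μ ^ k)) / (lam - μ) := by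
  have hρ0 : 0 < ρ := by linarith
  have hsum : ∀ z : ℂ, ‖z‖ < ρ → Summable (fun k => h k * z ^ k) := by
    intro z hz
    refine Summable.of_norm_bounded hh (fun k => ?_)
    rw [norm_mul, norm_pow]
    gcongr
  have htail : ∀ j : ℕ, Summable (fun k => ‖h (j + 1 + k)‖ * ρ ^ (j + 1 + k)) := by
    intro j
    have := (summable_nat_add_iff (j + 1)).2 hh
    simpa [add_comm] using this
  have hterm : ∀ j k : ℕ, ‖h (j + 1 + k) * μ ^ k‖ * ρ ^ j
      ≤ ‖h (j + 1 + k)‖ * ρ ^ (j + 1 + k) := by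
    intro j k
    rw [norm_mul, norm_pow, mul_assoc]
    have h1 : ‖μ‖ ^ k ≤ ρ ^ k := by gcongr
    have h2 : ρ ^ j ≤ ρ ^ (j + 1) := pow_le_pow_right₀ hρ.le (by omega)
    have h3 : ‖μ‖ ^ k * ρ ^ j ≤ ρ ^ (j + 1 + k) := by
      rw [pow_add ρ (j + 1) k, mul_comm (ρ ^ (j + 1))]
      gcongr
    gcongr
  have hgs0 : ∀ j : ℕ, Summable (fun k => ‖h (j + 1 + k) * μ ^ k‖ * ρ ^ j) := fun j =>
    Summable.of_nonneg_of_le (fun k => by positivity) (hterm j) (htail j)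
  have hgs1 : ∀ j : ℕ, Summable (fun k => ‖h (j + 1 + k) * μ ^ k‖) := fun j =>
    (summable_mul_right_iff (pow_pos hρ0 j).ne').1 (hgs0 j)
  have hgs : ∀ j : ℕ, Summable (fun k => h (j + 1 + k) * μ ^ k) := fun j => (hgs1 j).of_norm
  set H := ∑' k : ℕ, ‖h k‖ * ρ ^ k with hH
  have hbd : ∀ j, ‖g j‖ * ρ ^ j ≤ H := by
    intro j
    calc ‖g j‖ * ρ ^ j ≤ (∑' k, ‖h (j + 1 + k) * μ ^ k‖) * ρ ^ j := by
          rw [hg j]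
          gcongr
          exact norm_tsum_le_tsum_norm (hgs1 j)
      _ = ∑' k, ‖h (j + 1 + k) * μ ^ k‖ * ρ ^ j := by rw [tsum_mul_right]
      _ ≤ ∑' k, ‖h (j + 1 + k)‖ * ρ ^ (j + 1 + k) :=
          (hgs0 j).tsum_le_tsum (hterm j) (htail j)
      _ ≤ H := by
          refine (htail j).tsum_le_tsum_of_inj (fun k => j + 1 + k)
            (fun a b hab => by simpa using hab) (fun c _ => by positivity) (fun k => le_rfl) hh
  have hrec : ∀ j, g j = h (j + 1) + μ * g (j + 1) := by
    intro j
    rw [hg j, hg (j + 1), (hgs j).tsum_eq_zero_add, ← tsum_mul_left]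
    simp only [add_zero, pow_zero, mul_one]
    congr 1
    refine tsum_congr (fun k => ?_)
    rw [show j + 1 + (k + 1) = j + 1 + 1 + k by ring]
    ring
  have hstep : ∀ j, ρ * (‖g j‖ * ρ ^ j) ≤
      ‖h (j + 1)‖ * ρ ^ (j + 1) + ‖μ‖ * (‖g (j + 1)‖ * ρ ^ (j + 1)) := by
    intro j
    have h1 : ‖g j‖ ≤ ‖h (j + 1)‖ + ‖μ‖ * ‖g (j + 1)‖ := by
      conv_lhs => rw [hrec j]
      exact (norm_add_le _ _).trans (by rw [norm_mul])
    calc ρ * (‖g j‖ * ρ ^ j) = ‖g j‖ * ρ ^ (j + 1) := by ring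
      _ ≤ (‖h (j + 1)‖ + ‖μ‖ * ‖g (j + 1)‖) * ρ ^ (j + 1) := by gcongr
      _ = _ := by ring
  have hh1 : Summable (fun k => ‖h (k + 1)‖ * ρ ^ (k + 1)) := (summable_nat_add_iff 1).2 hh
  have hH1 : ∑' k, ‖h (k + 1)‖ * ρ ^ (k + 1) ≤ H := by
    rw [hH, hh.tsum_eq_zero_add]
    have : 0 ≤ ‖h 0‖ * ρ ^ 0 := by positivity
    linarith
  have hd : 0 < ρ - ‖μ‖ := by linarith
  have hgsum : Summable (fun j => ‖g j‖ * ρ ^ j) := by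
    refine summable_of_sum_range_le (c := (H + ‖μ‖ * H) / (ρ - ‖μ‖))
      (fun j => by positivity) (fun N => ?_)
    rw [le_div_iff₀ hd]
    have h1 := Finset.sum_le_sum (s := Finset.range N) (fun j _ => hstep j)
    rw [← Finset.mul_sum, Finset.sum_add_distrib, ← Finset.mul_sum] at h1
    have h2 : ∑ j ∈ Finset.range N, ‖h (j + 1)‖ * ρ ^ (j + 1) ≤ H :=
      (hh1.sum_le_tsum _ (fun i _ => by positivity)).trans hH1
    have h3 := Finset.sum_range_succ' (fun j => ‖g j‖ * ρ ^ j) N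
    rw [Finset.sum_range_succ] at h3
    have h4 : 0 ≤ ‖g 0‖ * ρ ^ 0 := by positivity
    have h5 := hbd N
    have h6 : ∑ j ∈ Finset.range N, ‖g (j + 1)‖ * ρ ^ (j + 1) ≤
        ∑ j ∈ Finset.range N, ‖g j‖ * ρ ^ j + H := by linarith
    have h7 := mul_le_mul_of_nonneg_left h6 (norm_nonneg μ)
    linarith
  refine ⟨⟨hgsum, ?_⟩, ?_⟩
  · rw [le_div_iff₀ hd]
    have hg1 : Summable (fun j => ‖g (j + 1)‖ * ρ ^ (j + 1)) := (summable_nat_add_iff 1).2 hgsum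
    have h1 := (hgsum.mul_left ρ).tsum_le_tsum hstep (hh1.add (hg1.mul_left ‖μ‖))
    rw [tsum_mul_left, hh1.tsum_add (hg1.mul_left ‖μ‖), tsum_mul_left] at h1
    have h3 := hgsum.tsum_eq_zero_add
    have h4 : 0 ≤ ‖g 0‖ * ρ ^ 0 := by positivity
    have h6 : ∑' j, ‖g (j + 1)‖ * ρ ^ (j + 1) ≤ ∑' j, ‖g j‖ * ρ ^ j := by linarith
    have h7 := mul_le_mul_of_nonneg_left h6 (norm_nonneg μ)
    linarith
  · intro lam hl hne
    rw [eq_div_iff (sub_ne_zero.2 hne)]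
    have hG : Summable (fun j => g j * lam ^ j) := by
      refine Summable.of_norm_bounded hgsum (fun k => ?_)
      rw [norm_mul, norm_pow]
      gcongr
    have hG1 : Summable (fun j => g (j + 1) * lam ^ (j + 1)) := (summable_nat_add_iff (f := fun j => g j * lam ^ j) 1).2 hG
    have hL := hsum lam hl
    have hL1 : Summable (fun j => h (j + 1) * lam ^ (j + 1)) := (summable_nat_add_iff (f := fun j => h j * lam ^ j) 1).2 hL
    have e1 : lam * ∑' j, g j * lam ^ j =
        ∑' j, h (j + 1) * lam ^ (j + 1) + μ * ∑' j, g (j + 1) * lam ^ (j + 1) := by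
      rw [← tsum_mul_left, ← tsum_mul_left, ← hL1.tsum_add (hG1.mul_left μ)]
      refine tsum_congr (fun j => ?_)
      rw [hrec j]
      ring
    have e2 := hG.tsum_eq_zero_add
    have e3 := hL.tsum_eq_zero_add
    have e4 : ∑' k, h k * μ ^ k = h 0 + μ * g 0 := by
      rw [(hsum μ hμ).tsum_eq_zero_add, hg 0, ← tsum_mul_left]
      simp only [pow_zero, mul_one]
      congr 1
      refine tsum_congr (fun k => ?_)
      rw [show 0 + 1 + k = k + 1 by ring]
      ring
    rw [pow_zero, mul_one] at e2 e3
    linear_combination e1 - μ * e2 - e3 + e4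
end

section
/- Let M₁, M₂, M₃, M₄ ∈ SL(2,ℂ) satisfy M₁M₂M₃M₄ = Id and trace(M₁) = trace(M₂) = trace(M₃) = trace(M₄) = s. Set u = trace(M₁M₂), v = trace(M₂M₃), w = trace(M₁M₃). Then u² + v² + w² + u·v·w − 2s²(u + v + w) + 4(s² − 1) + s⁴ = 0. -/
theorem fricke_sum (A B C : Matrix (Fin 2) (Fin 2) ℂ) :
    (A * B * C).trace + (A * C * B).trace = A.trace * (B * C).trace + B.trace * (A * C).trace
      + C.trace * (A * B).trace - A.trace * B.trace * C.trace := by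
  simp only [Matrix.trace_fin_two, Matrix.mul_apply, Fin.sum_univ_two]
  ring

theorem fricke_prod (A B C : Matrix (Fin 2) (Fin 2) ℂ) :
    (A * B * C).trace * (A * C * B).trace = A.trace ^ 2 * B.det * C.det
      + B.trace ^ 2 * A.det * C.det + C.trace ^ 2 * A.det * B.det
      + (A * B).trace ^ 2 * C.det + (B * C).trace ^ 2 * A.det + (A * C).trace ^ 2 * B.det
      - A.trace * B.trace * (A * B).trace * C.det - B.trace * C.trace * (B * C).trace * A.det
      - A.trace * C.trace * (A * C).trace * B.det
      + (A * B).trace * (B * C).trace * (A * C).trace - 4 * A.det * B.det * C.det := by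
  simp only [Matrix.trace_fin_two, Matrix.det_fin_two, Matrix.mul_apply, Fin.sum_univ_two]
  ring

/- STATEMENT 2: The Vogt–Fricke trace relation for `M₁M₂M₃M₄ = Id` in `SL(2,ℂ)`
with equal traces `s`: with `u = tr(M₁M₂)`, `v = tr(M₂M₃)`, `w = tr(M₁M₃)`,
`u² + v² + w² + uvw - 2s²(u+v+w) + 4(s²-1) + s⁴ = 0`. -/
theorem stmt_2 (M₁ M₂ M₃ M₄ : Matrix (Fin 2) (Fin 2) ℂ)
    (hdet₁ : M₁.det = 1) (hdet₂ : M₂.det = 1) (hdet₃ : M₃.det = 1) (hdet₄ : M₄.det = 1)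
    (hprod : M₁ * M₂ * M₃ * M₄ = 1)
    (s : ℂ) (hs₁ : M₁.trace = s) (hs₂ : M₂.trace = s) (hs₃ : M₃.trace = s)
    (hs₄ : M₄.trace = s)
    (u v w : ℂ) (hu : (M₁ * M₂).trace = u) (hv : (M₂ * M₃).trace = v)
    (hw : (M₁ * M₃).trace = w) :
    u ^ 2 + v ^ 2 + w ^ 2 + u * v * w - 2 * s ^ 2 * (u + v + w) +
      4 * (s ^ 2 - 1) + s ^ 4 = 0 := by
  have h4 : M₁ * M₂ * M₃ = M₄.adjugate := by
    have h : M₁ * M₂ * M₃ * (M₄ * M₄.adjugate) = M₄.adjugate := by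
      rw [← Matrix.mul_assoc, hprod, Matrix.one_mul]
    rwa [Matrix.mul_adjugate, hdet₄, one_smul, Matrix.mul_one] at h
  have ht : (M₁ * M₂ * M₃).trace = s := by
    rw [h4, ← hs₄, Matrix.adjugate_fin_two, Matrix.trace_fin_two, Matrix.trace_fin_two]
    simp [add_comm]
  have h1 := fricke_sum M₁ M₂ M₃
  have h2 := fricke_prod M₁ M₂ M₃
  rw [ht, hs₁, hs₂, hs₃, hu, hv, hw] at h1 h2
  rw [hdet₁, hdet₂, hdet₃] at h2
  linear_combination s * h1 - h2
end

section
/- Let D = diag(i, −i) ∈ SL(2,ℂ) and let M₁, M₂, M₃, M₄ ∈ SL(2,ℂ) satisfy M₁M₂M₃M₄ = Id, M₃ = D⁻¹M₁D and M₄ = D⁻¹M₂D. Assume moreover: trace(M₁) = trace(M₂) = s where s is real with −2 < s < 2; trace(M₁M₂) and trace(M₂M₃) are real and lie in the open interval (−2, 2); and trace(M₁M₃) and trace(M₂M₄) are real. Then the quadruple is unitarizable by a diagonal matrix: there exists an invertible diagonal matrix T ∈ GL(2,ℂ) such that T Mₖ T⁻¹ ∈ SU(2) for all k = 1, …, 4.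 -/
lemma core_pos (s X Y : ℝ) (hs : s^2 < 4) (hX : 0 < X) (hY : 0 < Y)
    (h1 : X * Y < 1 + s^2/4) (h2 : X + Y ≤ 1 - s^2/4 + X * Y)
    (hx : 1 - s^2/4 ≤ X^2) (hy : 1 - s^2/4 ≤ Y^2) : False := by
  have h3 : s^2/4 ≤ (1-X)*(1-Y) := by nlinarith
  by_cases hX1 : 1 ≤ X
  · by_cases hY1 : 1 ≤ Y
    · nlinarith [mul_nonneg (sub_nonneg.2 hX1) (sub_nonneg.2 hY1)]
    · push Not at hY1
      have : X = 1 ∨ 1 < X := hX1.eq_or_lt.imp Eq.symm id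
      rcases this with rfl | h
      · nlinarith [sq_nonneg s]
      · nlinarith [mul_pos (sub_pos.2 h) (sub_pos.2 hY1), sq_nonneg s]
  · push Not at hX1
    by_cases hY1 : 1 ≤ Y
    · nlinarith [mul_nonneg (sub_pos.2 hX1).le (sub_nonneg.2 hY1), sq_nonneg s]
    · push Not at hY1
      -- wlog min
      rcases le_total X Y with h | h
      · have : (1-X)*(1-Y) ≤ (1-X)*(1-X) := by
          apply mul_le_mul_of_nonneg_left <;> linarith
        nlinarith
      · have : (1-X)*(1-Y) ≤ (1-Y)*(1-Y) := by
          apply mul_le_mul_of_nonneg_right <;> linarith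
        nlinarith

lemma core (s X Y m n : ℝ) (hs : s^2 < 4) (hm : m = 1 - s^2/4 + X*Y)
    (hn : n^2 = m^2 - (X+Y)^2) (h0 : 0 < m) (h2 : m < 2) :
    X^2 < 1 - s^2/4 ∨ Y^2 < 1 - s^2/4 := by
  by_contra! h
  obtain ⟨hx, hy⟩ := h
  have hab : |X+Y| ≤ m := by
    apply abs_le_of_sq_le_sq _ h0.le
    nlinarith [sq_nonneg n]
  have hab := abs_le.1 hab
  have hc : 0 < 1 - s^2/4 := by linarith
  have hxy : 0 < X * Y := by
    by_contra! hneg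
    have : (1 - s^2/4)^2 ≤ (X*Y)^2 := by
      rw [mul_pow, sq (1 - s^2/4)]
      exact mul_le_mul hx hy hc.le (sq_nonneg X)
    nlinarith
  rcases pos_and_pos_or_neg_and_neg_of_mul_pos hxy with ⟨a, b⟩ | ⟨a, b⟩
  · exact core_pos s X Y hs a b (by linarith) (by linarith) hx hy
  · exact core_pos s (-X) (-Y) hs (by linarith) (by linarith) (by linarith) (by linarith)
      (by linarith) (by linarith)

open Complex ComplexConjugate in
lemma unit_of (a b c d : ℂ) (k : ℝ) (hk : 0 < k) (hd : d = conj a) (hc : c = -k * conj b)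
    (hdet : a * d - b * c = 1) :
    (!![(√k : ℂ), 0; 0, 1] : Matrix (Fin 2) (Fin 2) ℂ) * !![a, b; c, d] *
      (!![(√k : ℂ), 0; 0, 1] : Matrix (Fin 2) (Fin 2) ℂ)⁻¹ ∈ Matrix.unitaryGroup (Fin 2) ℂ := by
  have ht : (√k : ℂ) ≠ 0 := by
    exact_mod_cast (Real.sqrt_pos.2 hk).ne'
  have ht2 : (√k : ℂ) * √k = k := by
    exact_mod_cast Real.mul_self_sqrt hk.le
  have hinv : (!![(√k : ℂ), 0; 0, 1] : Matrix (Fin 2) (Fin 2) ℂ)⁻¹ = !![(√k : ℂ)⁻¹, 0; 0, 1] := by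
    apply Matrix.inv_eq_right_inv
    ext i j; fin_cases i <;> fin_cases j <;> simp [Matrix.mul_apply, ht]
  have hct : c * (√k : ℂ)⁻¹ = -(√k * conj b) := by
    rw [hc, ← ht2]; field_simp
  have hmat : (!![(√k : ℂ), 0; 0, 1] : Matrix (Fin 2) (Fin 2) ℂ) * !![a, b; c, d] *
      !![(√k : ℂ)⁻¹, 0; 0, 1] = !![a, √k * b; -(√k * conj b), conj a] := by
    rw [← hct, ← hd]
    ext i j; fin_cases i <;> fin_cases j <;> simp [Matrix.mul_apply, Fin.sum_univ_two]
    field_simp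
  rw [hinv, hmat, Matrix.mem_unitaryGroup_iff]
  have key : a * conj a + k * (b * conj b) = 1 := by
    rw [← hdet, hd, hc]; ring
  ext i j; fin_cases i <;> fin_cases j <;>
    simp [Matrix.mul_apply, Fin.sum_univ_two, Matrix.star_apply]
  · linear_combination key + b * conj b * ht2
  · ring
  · ring
  · linear_combination key + b * conj b * ht2

open Complex ComplexConjugate in
lemma offdiag (b c f g : ℂ) (r : ℝ) (hr : r < 0) (hfg : f * g = r) (h : conj (b * g) = c * f) :
    ∃ k : ℝ, 0 < k ∧ c = -k * conj b ∧ g = -k * conj f := by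
  have hf : f ≠ 0 := by
    rintro rfl
    have : r = 0 := by simpa [eq_comm] using hfg
    exact hr.ne this
  have hcf : conj f ≠ 0 := by simpa using hf
  have hN : f * conj f = (normSq f : ℂ) := mul_conj f
  have hNp : 0 < normSq f := normSq_pos.2 hf
  have hNc : (normSq f : ℂ) ≠ 0 := by exact_mod_cast hNp.ne'
  have hg : g = -((-r / normSq f : ℝ) : ℂ) * conj f := by
    push_cast
    field_simp
    apply mul_left_cancel₀ hf
    linear_combination normSq f * hfg - r * hN
  refine ⟨-r / normSq f, by apply div_pos <;> linarith, ?_, hg⟩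
  apply mul_right_cancel₀ hf
  rw [← h, map_mul, hg]
  simp
  ring


/- STATEMENT 4: Unitarizability by a diagonal matrix for a symmetric quadruple in
`SL(2,ℂ)` with `M₁M₂M₃M₄ = Id`, `M₃ = D⁻¹M₁D`, `M₄ = D⁻¹M₂D` (`D = diag(i,-i)`),
equal real traces `s ∈ (-2,2)`, `tr(M₁M₂), tr(M₂M₃)` real in `(-2,2)` and
`tr(M₁M₃), tr(M₂M₄)` real. -/
theorem stmt_4 (M₁ M₂ M₃ M₄ : Matrix (Fin 2) (Fin 2) ℂ)
    (hdet₁ : M₁.det = 1) (hdet₂ : M₂.det = 1) (hdet₃ : M₃.det = 1) (hdet₄ : M₄.det = 1)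
    (hprod : M₁ * M₂ * M₃ * M₄ = 1)
    (hM₃ : M₃ = (!![Complex.I, 0; 0, -Complex.I])⁻¹ * M₁ * !![Complex.I, 0; 0, -Complex.I])
    (hM₄ : M₄ = (!![Complex.I, 0; 0, -Complex.I])⁻¹ * M₂ * !![Complex.I, 0; 0, -Complex.I])
    (s : ℝ) (hs : -2 < s ∧ s < 2)
    (htr₁ : M₁.trace = (s : ℂ)) (htr₂ : M₂.trace = (s : ℂ))
    (u : ℝ) (hu : (M₁ * M₂).trace = (u : ℂ)) (hu' : -2 < u ∧ u < 2)
    (v : ℝ) (hv : (M₂ * M₃).trace = (v : ℂ)) (hv' : -2 < v ∧ v < 2)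
    (hw₁ : ∃ w : ℝ, (M₁ * M₃).trace = (w : ℂ))
    (hw₂ : ∃ w : ℝ, (M₂ * M₄).trace = (w : ℂ)) :
    ∃ T : Matrix (Fin 2) (Fin 2) ℂ, T.IsDiag ∧ IsUnit T ∧
      T * M₁ * T⁻¹ ∈ Matrix.unitaryGroup (Fin 2) ℂ ∧
      T * M₂ * T⁻¹ ∈ Matrix.unitaryGroup (Fin 2) ℂ ∧
      T * M₃ * T⁻¹ ∈ Matrix.unitaryGroup (Fin 2) ℂ ∧
      T * M₄ * T⁻¹ ∈ Matrix.unitaryGroup (Fin 2) ℂ := by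

  have hDinv : (!![Complex.I, 0; 0, -Complex.I] : Matrix (Fin 2) (Fin 2) ℂ)⁻¹
      = !![-Complex.I, 0; 0, Complex.I] := by
    apply Matrix.inv_eq_right_inv
    ext i j; fin_cases i <;> fin_cases j <;> simp [Matrix.mul_apply]
  obtain ⟨a, b, c, d, rfl⟩ : ∃ a b c d, M₁ = !![a, b; c, d] := ⟨_, _, _, _, Matrix.eta_fin_two M₁⟩
  obtain ⟨e, f, g, h, rfl⟩ : ∃ a b c d, M₂ = !![a, b; c, d] := ⟨_, _, _, _, Matrix.eta_fin_two M₂⟩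
  have conjD : ∀ a b c d : ℂ, !![-Complex.I, 0; 0, Complex.I] * !![a, b; c, d] *
      !![Complex.I, 0; 0, -Complex.I] = !![a, -b; -c, d] := by
    intro a b c d
    have := Complex.I_mul_I
    ext i j; fin_cases i <;> fin_cases j <;> simp [Matrix.mul_apply, Fin.sum_univ_two]
    · linear_combination -a * this
    · linear_combination b * this
    · linear_combination c * this
    · linear_combination -d * this
  rw [hDinv, conjD] at hM₃ hM₄
  subst hM₃ hM₄
  obtain ⟨w₁, hw₁⟩ := hw₁
  obtain ⟨w₂, hw₂⟩ := hw₂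
  have hp00 := congrFun (congrFun hprod 0) 0
  have hp11 := congrFun (congrFun hprod 1) 1
  simp [Matrix.mul_apply, Fin.sum_univ_two] at hp00 hp11
  simp [Matrix.det_fin_two, Matrix.trace_fin_two] at hdet₁ hdet₂ htr₁ htr₂ hu hv hw₁ hw₂
  clear hprod hdet₃ hdet₄ hDinv conjD
  have hpt : a*e+b*g = c*f+d*h := by
    have : (a*e+b*g - (c*f+d*h))^2 = 0 := by
      linear_combination hp00 + hp11 - 2 * (e*h-f*g) * hdet₁ - 2 * hdet₂
    exact sub_eq_zero.1 (pow_eq_zero_iff (two_ne_zero) |>.1 this)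
  obtain ⟨x, rfl⟩ : ∃ x : ℂ, a = s/2 + x := ⟨a - s/2, by ring⟩
  obtain ⟨y, rfl⟩ : ∃ y : ℂ, e = s/2 + y := ⟨e - s/2, by ring⟩
  obtain rfl : d = s/2 - x := by linear_combination htr₁
  obtain rfl : h = s/2 - y := by linear_combination htr₂
  have hs2 : s^2 < 4 := by nlinarith
  set m : ℝ := 1 - (u+v)/4 with hm
  set n : ℝ := (u-v)/4 with hn
  have hxx : x * x = ((w₁ + 2 - 2 : ℝ) : ℂ)/4 + ((- (1:ℝ)/2 : ℝ) : ℂ) := by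
    push_cast
    linear_combination hw₁/4 - hdet₁/2
  have hyy : y * y = ((w₂ + 2 - 2 : ℝ) : ℂ)/4 + ((- (1:ℝ)/2 : ℝ) : ℂ) := by
    push_cast
    linear_combination hw₂/4 - hdet₂/2
  have hxy : x * y = ((1 - s^2/4 - m : ℝ) : ℂ) := by
    rw [hm]; push_cast
    linear_combination hu/4 + hv/4
  have hbg : b * g + c * f = ((2 * n : ℝ) : ℂ) := by
    rw [hn]; push_cast
    linear_combination hu/2 - hv/2
  have hbg' : c * f - b * g = s * (x + y) := by
    linear_combination -hpt
  have hbc : b * c = ((s^2/4 - 1 : ℝ) : ℂ) - x * x := by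
    push_cast; linear_combination -hdet₁
  have hfg : f * g = ((s^2/4 - 1 : ℝ) : ℂ) - y * y := by
    push_cast; linear_combination -hdet₂
  have hsq : (x+y) * (x+y) = ((n^2 - m^2 : ℝ) : ℂ) := by
    have h1 : (b*g + c*f)^2 - (c*f-b*g)^2 = 4 * (b*c) * (f*g) := by ring
    rw [hbg, hbg', hbc, hfg] at h1
    push_cast at h1 hxy ⊢
    have hmm : (m:ℂ) = 1 - s^2/4 - x*y := by linear_combination hxy
    rw [hmm]
    linear_combination -h1/4
  have hnm : n^2 < m^2 := by
    apply sq_lt_sq.2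
    have h0 : 0 < m := by rw [hm]; linarith
    rw [abs_of_pos h0, abs_lt]
    constructor <;> rw [hm, hn] <;> linarith
  have h0 : 0 < m := by rw [hm]; linarith
  have h2 : m < 2 := by rw [hm]; linarith
  have exx := congrArg Complex.im hxx
  have eyy := congrArg Complex.im hyy
  have exy := congrArg Complex.im hxy
  have exy' := congrArg Complex.re hxy
  have esq := congrArg Complex.re hsq
  have hi : ∀ r : ℝ, ((r:ℂ)/4).im = 0 := by intro r; simp
  rw [Complex.add_im, hi, Complex.ofReal_im, Complex.mul_im] at exx eyy
  rw [Complex.ofReal_im, Complex.mul_im] at exy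
  rw [Complex.ofReal_re, Complex.mul_re] at exy' esq
  rw [Complex.add_re, Complex.add_im] at esq
  have hxr : x.re = 0 := by
    by_contra hne
    have h1 : x.im = 0 := by
      apply (mul_eq_zero.1 (show x.re * x.im = 0 by linarith)).resolve_left hne
    have h2 : y.im = 0 := by
      rw [h1] at exy
      exact (mul_eq_zero.1 (show x.re * y.im = 0 by linarith)).resolve_left hne
    rw [h1, h2] at esq
    nlinarith [sq_nonneg (x.re+y.re)]
  have hyr : y.re = 0 := by
    by_contra hne
    have h1 : y.im = 0 := by
      apply (mul_eq_zero.1 (show y.re * y.im = 0 by linarith)).resolve_left hne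
    have h2 : x.im = 0 := by
      rw [h1] at exy
      exact (mul_eq_zero.1 (show y.re * x.im = 0 by linarith)).resolve_left hne
    rw [h1, h2] at esq
    nlinarith [sq_nonneg (x.re+y.re)]
  rw [hxr, hyr] at exy' esq
  have hc2 : (starRingEnd ℂ) 2 = 2 := Complex.conj_ofNat 2
  have hcx : (starRingEnd ℂ) x = -x := by apply Complex.ext <;> simp [hxr]
  have hcy : (starRingEnd ℂ) y = -y := by apply Complex.ext <;> simp [hyr]
  have hxx' : x * x = ((-(x.im^2) : ℝ) : ℂ) := by
    apply Complex.ext <;> simp [hxr, -Complex.ofReal_neg, -Complex.ofReal_pow]; ring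
  have hyy' : y * y = ((-(y.im^2) : ℝ) : ℂ) := by
    apply Complex.ext <;> simp [hyr, -Complex.ofReal_neg, -Complex.ofReal_pow]; ring
  have hcore := core s x.im y.im m n hs2 (by linarith) (by nlinarith) h0 h2
  have hconj : (starRingEnd ℂ) (b * g) = c * f := by
    have e1 : b * g = n - s * (x+y)/2 := by
      push_cast at hbg
      linear_combination hbg/2 - hbg'/2
    have e2 : c * f = n + s * (x+y)/2 := by
      push_cast at hbg
      linear_combination hbg/2 + hbg'/2
    rw [e1, e2]
    simp [hcx, hcy, hc2]
    ring
  have hk : ∃ k : ℝ, 0 < k ∧ c = -k * (starRingEnd ℂ) b ∧ g = -k * (starRingEnd ℂ) f := by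
    rcases hcore with hX | hY
    · obtain ⟨k, hk, h1, h2⟩ := offdiag f g b c (s^2/4 - 1 + x.im^2) (by linarith)
        (by rw [hbc, hxx']; push_cast; ring)
        (by rw [mul_comm f c, ← hconj, Complex.conj_conj]; ring)
      exact ⟨k, hk, h2, h1⟩
    · exact offdiag b c f g (s^2/4 - 1 + y.im^2) (by linarith)
        (by rw [hfg, hyy']; push_cast; ring) hconj
  obtain ⟨k, hk, hc, hg⟩ := hk
  have hd1 : (s:ℂ)/2 - x = (starRingEnd ℂ) (s/2 + x) := by simp [hcx, hc2]; ring
  have hd2 : (s:ℂ)/2 - y = (starRingEnd ℂ) (s/2 + y) := by simp [hcy, hc2]; ring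
  refine ⟨!![(√k : ℂ), 0; 0, 1], ?_, ?_, unit_of _ _ _ _ k hk hd1 hc hdet₁,
    unit_of _ _ _ _ k hk hd2 hg hdet₂, 
    unit_of _ _ _ _ k hk hd1 (by rw [hc, map_neg]; ring) (by linear_combination hdet₁),
    unit_of _ _ _ _ k hk hd2 (by rw [hg, map_neg]; ring) (by linear_combination hdet₂)⟩
  · intro i j hij
    fin_cases i <;> fin_cases j <;> simp at hij ⊢
  · rw [Matrix.isUnit_iff_isUnit_det, Matrix.det_fin_two, isUnit_iff_ne_zero]
    have : (√k : ℂ) ≠ 0 := by exact_mod_cast (Real.sqrt_pos.2 hk).ne'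
    simpa using this
end

section
/- Let C = [[0, i], [i, 0]] and D = [[i, 0], [0, −i]] in SL(2,ℂ). Then for every P ∈ SL(2,ℂ) one has trace(−(P C P⁻¹ D)²) = 2 − 4(P₁₁P₂₁ − P₁₂P₂₂)², and for every Q ∈ SL(2,ℂ) one has trace(−(Q D C Q⁻¹ D)²) = 2 + 4(Q₁₁Q₂₁ + Q₁₂Q₂₂)², where the subscripts denote matrix entries. -/
/- STATEMENT 5: Fricke-type coordinates: with `C = [[0,i],[i,0]]`, `D = diag(i,-i)`,
for `P, Q ∈ SL(2,ℂ)`: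
`trace(-(P C P⁻¹ D)²) = 2 - 4(P₁₁P₂₁ - P₁₂P₂₂)²` and
`trace(-(Q D C Q⁻¹ D)²) = 2 + 4(Q₁₁Q₂₁ + Q₁₂Q₂₂)²`. -/
theorem stmt_5 (P Q : Matrix (Fin 2) (Fin 2) ℂ) (hP : P.det = 1) (hQ : Q.det = 1) :
    (-(P * !![0, Complex.I; Complex.I, 0] * P⁻¹ *
        !![Complex.I, 0; 0, -Complex.I]) ^ 2).trace =
      2 - 4 * (P 0 0 * P 1 0 - P 0 1 * P 1 1) ^ 2 ∧
    (-(Q * !![Complex.I, 0; 0, -Complex.I] * !![0, Complex.I; Complex.I, 0] * Q⁻¹ *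
        !![Complex.I, 0; 0, -Complex.I]) ^ 2).trace =
      2 + 4 * (Q 0 0 * Q 1 0 + Q 0 1 * Q 1 1) ^ 2 := by
  have key : ∀ X : Matrix (Fin 2) (Fin 2) ℂ, (-X ^ 2).trace = 2 * X.det - X.trace ^ 2 := by
    intro X
    simp only [pow_two, Matrix.trace_fin_two, Matrix.det_fin_two, Matrix.neg_apply,
      Matrix.mul_apply, Fin.sum_univ_two]
    ring
  have hI : Complex.I ^ 2 = -1 := Complex.I_sq
  have hI4 : Complex.I ^ 4 = 1 := Complex.I_pow_four
  have hi : ∀ X : Matrix (Fin 2) (Fin 2) ℂ, X.det = 1 →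
      X⁻¹ = !![X 1 1, -X 0 1; -X 1 0, X 0 0] := by
    intro X hX
    rw [Matrix.inv_def, hX, Matrix.adjugate_fin_two]
    simp
  have hdi : ∀ X : Matrix (Fin 2) (Fin 2) ℂ, X.det = 1 → X⁻¹.det = 1 := by
    intro X hX
    rw [Matrix.det_nonsing_inv, hX]
    simp
  constructor
  · rw [key]
    have h1 : (P * !![0, Complex.I; Complex.I, 0] * P⁻¹ *
        !![Complex.I, 0; 0, -Complex.I]).det = 1 := by
      rw [Matrix.det_mul, Matrix.det_mul, Matrix.det_mul, hP, hdi P hP]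
      simp [Matrix.det_fin_two]
    have h2 : (P * !![0, Complex.I; Complex.I, 0] * P⁻¹ *
        !![Complex.I, 0; 0, -Complex.I]).trace = 2 * (P 0 0 * P 1 0 - P 0 1 * P 1 1) := by
      rw [hi P hP]
      simp [Matrix.trace_fin_two, Matrix.mul_apply, Fin.sum_univ_two]
      ring_nf
      simp only [hI]
      ring
    rw [h1, h2]
    ring
  · rw [key]
    have h1 : (Q * !![Complex.I, 0; 0, -Complex.I] * !![0, Complex.I; Complex.I, 0] * Q⁻¹ *
        !![Complex.I, 0; 0, -Complex.I]).det = 1 := by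
      rw [Matrix.det_mul, Matrix.det_mul, Matrix.det_mul, Matrix.det_mul, hQ, hdi Q hQ]
      simp [Matrix.det_fin_two]
    have h2 : (Q * !![Complex.I, 0; 0, -Complex.I] * !![0, Complex.I; Complex.I, 0] * Q⁻¹ *
        !![Complex.I, 0; 0, -Complex.I]).trace =
        2 * Complex.I * (Q 0 0 * Q 1 0 + Q 0 1 * Q 1 1) := by
      rw [hi Q hQ]
      simp [Matrix.trace_fin_two, Matrix.mul_apply, Fin.sum_univ_two]
      linear_combination (-2 * Complex.I * (Q 0 0 * Q 1 0 + Q 0 1 * Q 1 1)) * hI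
    rw [h1, h2]
    linear_combination (-4 * (Q 0 0 * Q 1 0 + Q 0 1 * Q 1 1) ^ 2) * hI
end

section
/- Let φ ∈ (0, π/2). Then the integrals along the real segment [0,1] satisfy: ∫₀¹ F_a(t) dt = i(π − 2φ), ∫₀¹ F_b(t) dt = log((1 − cos φ)/(1 + cos φ)), and ∫₀¹ F_c(t) dt = iπ. -/
noncomputable section

/-- `p₁ = e^{iφ}` -/
def p₁ (φ : ℝ) : ℂ := Complex.exp (Complex.I * (φ : ℂ))
/-- `p₂ = -e^{-iφ}` -/
def p₂ (φ : ℝ) : ℂ := -Complex.exp (-(Complex.I * (φ : ℂ)))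
/-- `p₃ = -e^{iφ}` -/
def p₃ (φ : ℝ) : ℂ := -p₁ φ
/-- `p₄ = e^{-iφ}` -/
def p₄ (φ : ℝ) : ℂ := Complex.exp (-(Complex.I * (φ : ℂ)))

def Fa (φ : ℝ) (z : ℂ) : ℂ :=
  1 / (z - p₁ φ) - 1 / (z - p₂ φ) + 1 / (z - p₃ φ) - 1 / (z - p₄ φ)

def Fb (φ : ℝ) (z : ℂ) : ℂ :=
  1 / (z - p₁ φ) - 1 / (z - p₂ φ) - 1 / (z - p₃ φ) + 1 / (z - p₄ φ)

def Fc (φ : ℝ) (z : ℂ) : ℂ :=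
  1 / (z - p₁ φ) + 1 / (z - p₂ φ) - 1 / (z - p₃ φ) - 1 / (z - p₄ φ)

theorem aux_int (p : ℂ) (hp : p.im ≠ 0) :
    IntervalIntegrable (fun t : ℝ => 1 / ((t : ℂ) - p)) MeasureTheory.volume 0 1 ∧
    (∫ t in (0:ℝ)..1, 1 / ((t : ℂ) - p)) = Complex.log (1 - 1 / p) := by
  have hp0 : p ≠ 0 := by rintro rfl; simp at hp
  have hne : ∀ t : ℝ, (t : ℂ) - p ≠ 0 := by
    intro t h
    apply hp
    have := congrArg Complex.im h
    simpa using this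
  have hc : Continuous (fun t : ℝ => 1 / ((t : ℂ) - p)) :=
    continuous_const.div (by fun_prop) hne
  have hi : IntervalIntegrable (fun t : ℝ => 1 / ((t : ℂ) - p)) MeasureTheory.volume 0 1 :=
    hc.intervalIntegrable 0 1
  refine ⟨hi, ?_⟩
  have hd : ∀ t : ℝ, HasDerivAt (fun t : ℝ => Complex.log (1 - (t : ℂ) * p⁻¹))
      (1 / ((t : ℂ) - p)) t := by
    intro t
    have h1 : HasDerivAt (fun t : ℝ => 1 - (t : ℂ) * p⁻¹) (-(1 * p⁻¹)) t :=
      ((Complex.ofRealCLM.hasDerivAt (x := t)).mul_const p⁻¹).const_sub 1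
    have hs : 1 - (t : ℂ) * p⁻¹ ∈ Complex.slitPlane := by
      rw [Complex.mem_slitPlane_iff]
      by_cases ht : t = 0
      · left; simp [ht]
      · right
        have : Complex.normSq p ≠ 0 := by simpa using hp0
        simp [Complex.inv_im, ht, hp, hp0]
    have h2 := h1.clog_real hs
    convert h2 using 1
    have h3 := hne t
    have h4 : 1 - (t : ℂ) * p⁻¹ ≠ 0 := Complex.slitPlane_ne_zero hs
    rw [div_eq_div_iff h3 h4]
    field_simp
    ring
  rw [intervalIntegral.integral_eq_sub_of_hasDerivAt (fun t _ => hd t) hi]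
  simp

theorem aux_log (z : ℂ) (r θ : ℝ) (hr : 0 < r) (h1 : -Real.pi < θ) (h2 : θ ≤ Real.pi)
    (hre : z.re = r * Real.cos θ) (him : z.im = r * Real.sin θ) :
    Complex.log z = (Real.log r : ℂ) + θ * Complex.I := by
  have : z = Complex.exp ((Real.log r : ℂ) + θ * Complex.I) := by
    rw [Complex.exp_add, ← Complex.ofReal_exp, Real.exp_log hr]
    apply Complex.ext
    · simp [hre, Complex.exp_ofReal_mul_I_re, Complex.exp_ofReal_mul_I_im]
    · simp [him, Complex.exp_ofReal_mul_I_re, Complex.exp_ofReal_mul_I_im]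
  rw [this, Complex.log_exp] <;> simpa

/- STATEMENT 6: the integrals of `F_a, F_b, F_c` along the real segment `[0,1]`. -/
theorem stmt_6 (φ : ℝ) (hφ : φ ∈ Set.Ioo 0 (Real.pi / 2)) :
    (∫ t in (0:ℝ)..1, Fa φ (t : ℂ)) = Complex.I * ((Real.pi : ℂ) - 2 * (φ : ℂ)) ∧
    (∫ t in (0:ℝ)..1, Fb φ (t : ℂ)) =
      ((Real.log ((1 - Real.cos φ) / (1 + Real.cos φ)) : ℝ) : ℂ) ∧
    (∫ t in (0:ℝ)..1, Fc φ (t : ℂ)) = Complex.I * (Real.pi : ℂ) := by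
  obtain ⟨h0, h1⟩ := hφ
  have hs : 0 < Real.sin φ := Real.sin_pos_of_pos_of_lt_pi h0 (by linarith)
  have hS : 0 < Real.sin (φ / 2) := Real.sin_pos_of_pos_of_lt_pi (by linarith) (by linarith)
  have hC : 0 < Real.cos (φ / 2) := Real.cos_pos_of_mem_Ioo ⟨by linarith, by linarith⟩
  have e1 : (Complex.exp (Complex.I * (φ : ℂ))) = ⟨Real.cos φ, Real.sin φ⟩ := by
    rw [mul_comm]
    exact Complex.ext (Complex.exp_ofReal_mul_I_re φ) (Complex.exp_ofReal_mul_I_im φ)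
  have e2 : (Complex.exp (-(Complex.I * (φ : ℂ)))) = ⟨Real.cos φ, -Real.sin φ⟩ := by
    have : -(Complex.I * (φ : ℂ)) = ((-φ : ℝ) : ℂ) * Complex.I := by push_cast; ring
    rw [this]
    apply Complex.ext
    · rw [Complex.exp_ofReal_mul_I_re, Real.cos_neg]
    · rw [Complex.exp_ofReal_mul_I_im, Real.sin_neg]
  have ee : Complex.exp (Complex.I * (φ : ℂ)) * Complex.exp (-(Complex.I * (φ : ℂ))) = 1 := by
    rw [← Complex.exp_add]; simp
  have i1 : 1 / p₁ φ = ⟨Real.cos φ, -Real.sin φ⟩ := by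
    rw [← e2, p₁, Complex.exp_neg, one_div]
  have i4 : 1 / p₄ φ = ⟨Real.cos φ, Real.sin φ⟩ := by
    rw [← e1, p₄, Complex.exp_neg, one_div, inv_inv]
  have i2 : 1 / p₂ φ = -⟨Real.cos φ, Real.sin φ⟩ := by
    rw [← i4, p₂, p₄, div_neg]
  have i3 : 1 / p₃ φ = -⟨Real.cos φ, -Real.sin φ⟩ := by
    rw [← i1, p₃, div_neg]
  have c2 : Real.cos φ = 2 * Real.cos (φ / 2) ^ 2 - 1 := by
    rw [← Real.cos_two_mul]; congr 1; ring
  have s2 : Real.sin φ = 2 * Real.sin (φ / 2) * Real.cos (φ / 2) := by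
    rw [← Real.sin_two_mul]; congr 1; ring
  have sc := Real.sin_sq_add_cos_sq (φ / 2)
  obtain ⟨n1, j1⟩ := aux_int (p₁ φ) (by rw [p₁, e1]; exact hs.ne')
  obtain ⟨n2, j2⟩ := aux_int (p₂ φ) (by rw [p₂, e2]; simpa using hs.ne')
  obtain ⟨n3, j3⟩ := aux_int (p₃ φ) (by rw [p₃, p₁, e1]; simpa using hs.ne')
  obtain ⟨n4, j4⟩ := aux_int (p₄ φ) (by rw [p₄, e2]; simpa using hs.ne')
  rw [i1, aux_log _ (2 * Real.sin (φ / 2)) (Real.pi / 2 - φ / 2) (by linarith) (by linarith)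
    (by linarith) (by rw [Real.cos_pi_div_two_sub]; simp; nlinarith)
    (by rw [Real.sin_pi_div_two_sub]; simp; nlinarith)] at j1
  rw [i2, aux_log _ (2 * Real.cos (φ / 2)) (φ / 2) (by linarith) (by linarith)
    (by linarith) (by simp; nlinarith) (by simp; nlinarith)] at j2
  rw [i3, aux_log _ (2 * Real.cos (φ / 2)) (-(φ / 2)) (by linarith) (by linarith)
    (by linarith) (by rw [Real.cos_neg]; simp; nlinarith)
    (by rw [Real.sin_neg]; simp; nlinarith)] at j3
  rw [i4, aux_log _ (2 * Real.sin (φ / 2)) (-(Real.pi / 2 - φ / 2)) (by linarith) (by linarith)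
    (by linarith) (by rw [Real.cos_neg, Real.cos_pi_div_two_sub]; simp; nlinarith)
    (by rw [Real.sin_neg, Real.sin_pi_div_two_sub]; simp; nlinarith)] at j4
  refine ⟨?_, ?_, ?_⟩
  · unfold Fa
    rw [intervalIntegral.integral_sub ((n1.sub n2).add n3) n4,
      intervalIntegral.integral_add (n1.sub n2) n3, intervalIntegral.integral_sub n1 n2,
      j1, j2, j3, j4]
    push_cast; ring
  · unfold Fb
    rw [intervalIntegral.integral_add ((n1.sub n2).sub n3) n4,
      intervalIntegral.integral_sub (n1.sub n2) n3, intervalIntegral.integral_sub n1 n2,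
      j1, j2, j3, j4]
    have hl : Real.log ((1 - Real.cos φ) / (1 + Real.cos φ)) =
        2 * Real.log (2 * Real.sin (φ / 2)) - 2 * Real.log (2 * Real.cos (φ / 2)) := by
      have : (1 - Real.cos φ) / (1 + Real.cos φ) =
          (2 * Real.sin (φ / 2)) ^ 2 / (2 * Real.cos (φ / 2)) ^ 2 := by
        have a1 : 1 - Real.cos φ = 2 * Real.sin (φ / 2) ^ 2 := by linarith
        have a2 : 1 + Real.cos φ = 2 * Real.cos (φ / 2) ^ 2 := by linarith
        rw [a1, a2]
        field_simp
      rw [this, Real.log_div (by positivity) (by positivity), Real.log_pow, Real.log_pow]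
      norm_num
    rw [hl]
    push_cast; ring
  · unfold Fc
    rw [intervalIntegral.integral_sub ((n1.add n2).sub n3) n4,
      intervalIntegral.integral_sub (n1.add n2) n3, intervalIntegral.integral_add n1 n2,
      j1, j2, j3, j4]
    push_cast; ring
end
end

section
/- Let φ ∈ (0, π/2). Then the integrals along the straight segment from 0 to i, parametrized as z = it with t ∈ [0,1], satisfy: ∫₀¹ F_a(it)·i dt = −2iφ, ∫₀¹ F_b(it)·i dt = −iπ, and ∫₀¹ F_c(it)·i dt = log((1 − sin φ)/(1 + sin φ)). -/
noncomputable section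

theorem aux_arctan (h : ℝ) (h0 : 0 < h) (h1 : h < Real.pi / 2) :
    Real.arctan ((1 - Real.cos (2 * h)) / Real.sin (2 * h)) = h := by
  have hs : 0 < Real.sin h := Real.sin_pos_of_pos_of_lt_pi h0 (by linarith)
  have hc : 0 < Real.cos h := Real.cos_pos_of_mem_Ioo ⟨by linarith, h1⟩
  have : (1 - Real.cos (2 * h)) / Real.sin (2 * h) = Real.tan h := by
    rw [Real.tan_eq_sin_div_cos, Real.sin_two_mul, Real.cos_two_mul]
    field_simp
    nlinarith [Real.sin_sq_add_cos_sq h]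
  rw [this, Real.arctan_tan (by linarith) h1]

theorem aux_int_atan (c d : ℝ) (hc : 0 < c) :
    (∫ t in (0:ℝ)..1, c / (c ^ 2 + (t + d) ^ 2)) =
      Real.arctan ((1 + d) / c) - Real.arctan (d / c) := by
  have key : ∀ t : ℝ, HasDerivAt (fun t : ℝ => Real.arctan ((t + d) / c))
      (c / (c ^ 2 + (t + d) ^ 2)) t := by
    intro t
    have h := ((((hasDerivAt_id t).add_const d).div_const c).arctan)
    refine h.congr_deriv ?_
    have : 0 < c ^ 2 + (t + d) ^ 2 := by positivity
    field_simp
    rfl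
  rw [intervalIntegral.integral_eq_sub_of_hasDerivAt (fun t _ => key t)]
  · simp
  · apply Continuous.intervalIntegrable
    refine Continuous.div (by fun_prop) (by fun_prop) (fun t => ?_)
    positivity

theorem aux_int_log (c d : ℝ) (hc : 0 < c) :
    (∫ t in (0:ℝ)..1, (2 * (t + d)) / (c ^ 2 + (t + d) ^ 2)) =
      Real.log (c ^ 2 + (1 + d) ^ 2) - Real.log (c ^ 2 + d ^ 2) := by
  have key : ∀ t : ℝ, HasDerivAt (fun t : ℝ => Real.log (c ^ 2 + (t + d) ^ 2))
      ((2 * (t + d)) / (c ^ 2 + (t + d) ^ 2)) t := by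
    intro t
    have h := (((((hasDerivAt_id t).add_const d).pow 2).const_add (c ^ 2)).log
      (by simp only [Pi.pow_apply, id]; positivity))
    refine h.congr_deriv ?_
    norm_num [Pi.pow_apply, id]
  rw [intervalIntegral.integral_eq_sub_of_hasDerivAt (fun t _ => key t)]
  · simp
  · apply Continuous.intervalIntegrable
    refine Continuous.div (by fun_prop) (by fun_prop) (fun t => ?_)
    positivity

theorem aux_inv (c u : ℝ) (hc : 0 < c) :
    1 / ((c : ℂ) + Complex.I * u) = (c - Complex.I * u) / ((c : ℂ) ^ 2 + u ^ 2) ∧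
    1 / (-(c : ℂ) + Complex.I * u) = (-c - Complex.I * u) / ((c : ℂ) ^ 2 + u ^ 2) := by
  have hne : ((c : ℂ) ^ 2 + u ^ 2) ≠ 0 := by
    have : (c ^ 2 + u ^ 2 : ℝ) ≠ 0 := by positivity
    exact_mod_cast this
  have e1 : ((c : ℂ) + Complex.I * u) * (c - Complex.I * u) = (c : ℂ) ^ 2 + u ^ 2 := by
    linear_combination (-(u : ℂ) ^ 2) * Complex.I_sq
  have e2 : (-(c : ℂ) + Complex.I * u) * (-c - Complex.I * u) = (c : ℂ) ^ 2 + u ^ 2 := by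
    linear_combination (-(u : ℂ) ^ 2) * Complex.I_sq
  constructor
  · rw [div_eq_div_iff (by intro h; rw [h, zero_mul] at e1; exact hne e1.symm) hne]
    linear_combination -e1
  · rw [div_eq_div_iff (by intro h; rw [h, zero_mul] at e2; exact hne e2.symm) hne]
    linear_combination -e2

theorem aux_cont (c d : ℝ) (hc : 0 < c) :
    Continuous (fun t : ℝ => c / (c ^ 2 + (t + d) ^ 2)) ∧
    Continuous (fun t : ℝ => (2 * (t + d)) / (c ^ 2 + (t + d) ^ 2)) := by
  constructor <;>
  · refine Continuous.div (by fun_prop) (by fun_prop) (fun t => ?_)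
    positivity

theorem aux_recip (φ : ℝ) (hc : 0 < Real.cos φ) (t : ℝ) :
    1 / (Complex.I * (t : ℂ) - p₁ φ) = (-(Real.cos φ : ℂ) - Complex.I * ((t + -Real.sin φ : ℝ) : ℂ)) /
      ((Real.cos φ : ℂ) ^ 2 + ((t + -Real.sin φ : ℝ) : ℂ) ^ 2) ∧
    1 / (Complex.I * (t : ℂ) - p₂ φ) = ((Real.cos φ : ℂ) - Complex.I * ((t + -Real.sin φ : ℝ) : ℂ)) /
      ((Real.cos φ : ℂ) ^ 2 + ((t + -Real.sin φ : ℝ) : ℂ) ^ 2) ∧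
    1 / (Complex.I * (t : ℂ) - p₃ φ) = ((Real.cos φ : ℂ) - Complex.I * ((t + Real.sin φ : ℝ) : ℂ)) /
      ((Real.cos φ : ℂ) ^ 2 + ((t + Real.sin φ : ℝ) : ℂ) ^ 2) ∧
    1 / (Complex.I * (t : ℂ) - p₄ φ) = (-(Real.cos φ : ℂ) - Complex.I * ((t + Real.sin φ : ℝ) : ℂ)) /
      ((Real.cos φ : ℂ) ^ 2 + ((t + Real.sin φ : ℝ) : ℂ) ^ 2) := by
  have e1 : Complex.exp (Complex.I * (φ : ℂ)) = (Real.cos φ : ℂ) + Complex.I * (Real.sin φ : ℂ) := by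
    rw [mul_comm, Complex.exp_mul_I, Complex.ofReal_cos, Complex.ofReal_sin]; ring
  have e2 : Complex.exp (-(Complex.I * (φ : ℂ))) = (Real.cos φ : ℂ) - Complex.I * (Real.sin φ : ℂ) := by
    rw [show -(Complex.I * (φ : ℂ)) = (-φ : ℂ) * Complex.I by ring, Complex.exp_mul_I,
      Complex.cos_neg, Complex.sin_neg, Complex.ofReal_cos, Complex.ofReal_sin]; ring
  have a := aux_inv (Real.cos φ) (t + -Real.sin φ) hc
  have b := aux_inv (Real.cos φ) (t + Real.sin φ) hc
  refine ⟨?_, ?_, ?_, ?_⟩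
  · rw [← a.2, p₁, e1]; congr 1; push_cast; ring
  · rw [← a.1, p₂, e2]; congr 1; push_cast; ring
  · rw [← b.1, p₃, p₁, e1]; congr 1; push_cast; ring
  · rw [← b.2, p₄, e2]; congr 1; push_cast; ring

/- STATEMENT 7: the integrals of `F_a, F_b, F_c` along the segment from `0` to `i`,
parametrized as `z = it`, `t ∈ [0,1]`. -/
theorem stmt_7 (φ : ℝ) (hφ : φ ∈ Set.Ioo 0 (Real.pi / 2)) :
    (∫ t in (0:ℝ)..1, Fa φ (Complex.I * (t : ℂ)) * Complex.I) =
      -2 * Complex.I * (φ : ℂ) ∧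
    (∫ t in (0:ℝ)..1, Fb φ (Complex.I * (t : ℂ)) * Complex.I) =
      -Complex.I * (Real.pi : ℂ) ∧
    (∫ t in (0:ℝ)..1, Fc φ (Complex.I * (t : ℂ)) * Complex.I) =
      ((Real.log ((1 - Real.sin φ) / (1 + Real.sin φ)) : ℝ) : ℂ) := by
  obtain ⟨h0, h1⟩ := hφ
  have hc : 0 < Real.cos φ := Real.cos_pos_of_mem_Ioo ⟨by linarith, h1⟩
  have hsc := Real.sin_sq_add_cos_sq φ
  have hs : 0 < Real.sin φ := Real.sin_pos_of_pos_of_lt_pi h0 (by linarith)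
  have hs1 : Real.sin φ < 1 := by nlinarith
  have hr := aux_recip φ hc
  have t1 : Real.arctan (Real.sin φ / Real.cos φ) = φ := by
    rw [← Real.tan_eq_sin_div_cos, Real.arctan_tan (by linarith) h1]
  have t2 : Real.arctan ((1 + Real.sin φ) / Real.cos φ) = Real.pi / 4 + φ / 2 := by
    have := aux_arctan (Real.pi / 4 + φ / 2) (by linarith) (by linarith)
    rw [show 2 * (Real.pi / 4 + φ / 2) = φ + Real.pi / 2 by ring, Real.cos_add_pi_div_two,
      Real.sin_add_pi_div_two, sub_neg_eq_add] at this
    exact this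
  have t3 : Real.arctan ((1 + -Real.sin φ) / Real.cos φ) = Real.pi / 4 - φ / 2 := by
    have := aux_arctan (Real.pi / 4 - φ / 2) (by linarith) (by linarith)
    rw [show 2 * (Real.pi / 4 - φ / 2) = Real.pi / 2 - φ by ring, Real.cos_pi_div_two_sub,
      Real.sin_pi_div_two_sub] at this
    rw [← sub_eq_add_neg]
    exact this
  have i1 := aux_int_atan (Real.cos φ) (Real.sin φ) hc
  have i2 := aux_int_atan (Real.cos φ) (-Real.sin φ) hc
  rw [t1, t2] at i1
  rw [t3, neg_div, Real.arctan_neg, t1] at i2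
  have j1 := aux_int_log (Real.cos φ) (Real.sin φ) hc
  have j2 := aux_int_log (Real.cos φ) (-Real.sin φ) hc
  obtain ⟨c1, c1'⟩ := aux_cont (Real.cos φ) (Real.sin φ) hc
  obtain ⟨c2, c2'⟩ := aux_cont (Real.cos φ) (-Real.sin φ) hc
  refine ⟨?_, ?_, ?_⟩
  · have : ∀ t : ℝ, Fa φ (Complex.I * (t : ℂ)) * Complex.I = (2 * Complex.I) *
        ((Real.cos φ / (Real.cos φ ^ 2 + (t + Real.sin φ) ^ 2)
          - Real.cos φ / (Real.cos φ ^ 2 + (t + -Real.sin φ) ^ 2) : ℝ) : ℂ) := by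
      intro t
      obtain ⟨r1, r2, r3, r4⟩ := hr t
      rw [Fa, r1, r2, r3, r4]
      push_cast
      ring
    simp_rw [this]
    rw [intervalIntegral.integral_const_mul, intervalIntegral.integral_ofReal,
      intervalIntegral.integral_sub (c1.intervalIntegrable _ _) (c2.intervalIntegrable _ _), i1, i2]
    push_cast
    ring
  · have : ∀ t : ℝ, Fb φ (Complex.I * (t : ℂ)) * Complex.I = (-2 * Complex.I) *
        ((Real.cos φ / (Real.cos φ ^ 2 + (t + Real.sin φ) ^ 2)
          + Real.cos φ / (Real.cos φ ^ 2 + (t + -Real.sin φ) ^ 2) : ℝ) : ℂ) := by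
      intro t
      obtain ⟨r1, r2, r3, r4⟩ := hr t
      rw [Fb, r1, r2, r3, r4]
      push_cast
      ring
    simp_rw [this]
    rw [intervalIntegral.integral_const_mul, intervalIntegral.integral_ofReal,
      intervalIntegral.integral_add (c1.intervalIntegrable _ _) (c2.intervalIntegrable _ _), i1, i2]
    push_cast
    ring
  · have : ∀ t : ℝ, Fc φ (Complex.I * (t : ℂ)) * Complex.I =
        (((2 * (t + -Real.sin φ)) / (Real.cos φ ^ 2 + (t + -Real.sin φ) ^ 2)
          - (2 * (t + Real.sin φ)) / (Real.cos φ ^ 2 + (t + Real.sin φ) ^ 2) : ℝ) : ℂ) := by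
      intro t
      obtain ⟨r1, r2, r3, r4⟩ := hr t
      rw [Fc, r1, r2, r3, r4]
      push_cast
      ring_nf
      simp only [Complex.I_sq]
      ring
    simp_rw [this]
    rw [intervalIntegral.integral_ofReal,
      intervalIntegral.integral_sub (c2'.intervalIntegrable _ _) (c1'.intervalIntegrable _ _), j1, j2]
    congr 1
    rw [show Real.cos φ ^ 2 + (1 + -Real.sin φ) ^ 2 = 2 * (1 - Real.sin φ) by nlinarith,
      show Real.cos φ ^ 2 + (1 + Real.sin φ) ^ 2 = 2 * (1 + Real.sin φ) by nlinarith,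
      Real.log_mul (by norm_num) (by linarith), Real.log_mul (by norm_num) (by linarith),
      Real.log_div (by linarith) (by linarith), neg_sq]
    ring
end
end

section
/- Let φ ∈ (0, π/2) and define Ω_a(t) = ∫₀ᵗ F_a(s) ds and Ω_b(t) = ∫₀ᵗ F_b(s) ds for t ∈ [0,1]. Then ∫₀¹ (F_a(t)·Ω_b(t) − F_b(t)·Ω_a(t)) dt = 4πi·log(sin φ) − i(π − 2φ)·log((1 − cos φ)/(1 + cos φ)). -/
noncomputable section

/- STATEMENT 8: with `Ω_a(t) = ∫₀ᵗ F_a`, `Ω_b(t) = ∫₀ᵗ F_b` along `[0,1]`,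
`∫₀¹ (F_a Ω_b - F_b Ω_a) = 4πi log(sin φ) - i(π - 2φ) log((1-cos φ)/(1+cos φ))`. -/

open Real in
lemma aux_intlog (c : ℝ) (hc : |c| < 1) :
    ∫ θ in (0:ℝ)..π, log (1 + c ^ 2 + 2 * c * cos θ) = 0 := by
  have hpos : ∀ θ : ℝ, 0 < 1 + c ^ 2 + 2 * c * cos θ := by
    intro θ
    have h1 := abs_lt.mp hc
    have h2 := sin_sq_add_cos_sq θ
    have h3 : c ^ 2 < 1 := by nlinarith
    by_cases h : c = 0
    · simp [h]
    · have : 0 < c ^ 2 := by positivity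
      nlinarith [sq_nonneg (cos θ + c), sq_nonneg (sin θ), sq_nonneg (1 + c * cos θ), neg_one_le_cos θ, cos_le_one θ]
  have hcont : Continuous fun θ : ℝ => log (1 + c ^ 2 + 2 * c * cos θ) :=
    Continuous.log (by fun_prop) (fun θ => (hpos θ).ne')
  have h0 := circleAverage_log_norm_sub_const₀ (a := (-c : ℂ)) (by simpa using hc)
  rw [circleAverage_def] at h0
  have h1 : ∀ θ : ℝ, log ‖circleMap 0 1 θ - (-c : ℂ)‖ = (1 / 2) * log (1 + c ^ 2 + 2 * c * cos θ) := by
    intro θ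
    have : ‖circleMap 0 1 θ - (-c : ℂ)‖ ^ 2 = 1 + c ^ 2 + 2 * c * cos θ := by
      rw [← Complex.normSq_eq_norm_sq, Complex.normSq_apply]
      simp [circleMap, Complex.exp_ofReal_mul_I_re, Complex.exp_ofReal_mul_I_im]
      nlinarith [sin_sq_add_cos_sq θ]
    rw [← this, log_pow]; push_cast; ring
  simp only [h1] at h0
  rw [intervalIntegral.integral_const_mul] at h0
  have h2 : ∫ θ in (0:ℝ)..2 * π, log (1 + c ^ 2 + 2 * c * cos θ) = 0 := by
    have := pi_pos.ne'
    simpa [this] using h0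
  have h3 : ∫ θ in π..2 * π, log (1 + c ^ 2 + 2 * c * cos θ)
      = ∫ θ in (0:ℝ)..π, log (1 + c ^ 2 + 2 * c * cos θ) := by
    have := intervalIntegral.integral_comp_sub_left (a := 0) (b := π)
      (fun θ : ℝ => log (1 + c ^ 2 + 2 * c * cos θ)) (2 * π)
    simp only [cos_two_pi_sub] at this
    rw [this]; congr 1 <;> ring
  rw [← intervalIntegral.integral_add_adjacent_intervals (b := π)
    (hcont.intervalIntegrable _ _) (hcont.intervalIntegrable _ _), h3] at h2
  linarith

open Real in
lemma aux_arctan1 (φ : ℝ) (hφ : φ ∈ Set.Ioo 0 (π / 2)) :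
    arctan ((1 - cos φ) / sin φ) = φ / 2 := by
  obtain ⟨h0, h1⟩ := hφ
  rw [← arctan_tan (x := φ / 2) (by linarith) (by linarith)]
  have hs : 0 < sin (φ / 2) := sin_pos_of_pos_of_lt_pi (by linarith) (by linarith)
  have hc : 0 < cos (φ / 2) := cos_pos_of_mem_Ioo ⟨by linarith, by linarith⟩
  congr 1
  have e : φ = 2 * (φ / 2) := by ring
  rw [tan_eq_sin_div_cos, show cos φ = cos (2 * (φ / 2)) by rw [← e],
    show sin φ = sin (2 * (φ / 2)) by rw [← e], cos_two_mul, sin_two_mul]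
  field_simp
  nlinarith [sin_sq_add_cos_sq (φ / 2)]

open Real in
lemma aux_arctan2 (φ : ℝ) (hφ : φ ∈ Set.Ioo 0 (π / 2)) :
    arctan ((1 + cos φ) / sin φ) = π / 2 - φ / 2 := by
  have hs : 0 < sin φ := sin_pos_of_pos_of_lt_pi hφ.1 (by linarith [hφ.2, pi_pos])
  have hc : 0 < cos φ := cos_pos_of_mem_Ioo ⟨by linarith [hφ.1, pi_pos], hφ.2⟩
  have h1 := aux_arctan1 φ hφ
  rw [← h1, ← arctan_inv_of_pos]
  · congr 1
    have : 1 - cos φ ≠ 0 := by nlinarith [sin_sq_add_cos_sq φ]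
    field_simp
    nlinarith [sin_sq_add_cos_sq φ]
  · apply div_pos _ hs
    nlinarith [sin_sq_add_cos_sq φ]

open Real in
lemma aux_arctan3 (φ : ℝ) (hφ : φ ∈ Set.Ioo 0 (π / 2)) :
    arctan (cos φ / sin φ) = π / 2 - φ := by
  obtain ⟨h0, h1⟩ := hφ
  rw [← arctan_tan (x := π / 2 - φ) (by linarith) (by linarith), tan_eq_sin_div_cos,
    sin_pi_div_two_sub, cos_pi_div_two_sub]

open Real in
lemma aux_dA (c s : ℝ) (hs : 0 < s) (t : ℝ) :
    HasDerivAt (fun t => arctan ((t - c) / s)) (s / ((t - c) ^ 2 + s ^ 2)) t := by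
  have h : HasDerivAt (fun t : ℝ => (t - c) / s) (1 / s) t :=
    ((hasDerivAt_id t).sub_const c).div_const s
  convert h.arctan using 1
  have : (t - c) ^ 2 + s ^ 2 ≠ 0 := by positivity
  field_simp
  ring

open Real in
lemma aux_dL (c s : ℝ) (hs : 0 < s) (t : ℝ) :
    HasDerivAt (fun t => log ((t - c) ^ 2 + s ^ 2)) (2 * (t - c) / ((t - c) ^ 2 + s ^ 2)) t := by
  have h : HasDerivAt (fun t : ℝ => (t - c) ^ 2 + s ^ 2) (2 * (t - c)) t := by
    have h0 := (((hasDerivAt_id t).sub_const c).pow 2).add_const (s ^ 2)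
    have e : ((2 : ℕ) : ℝ) * (id t - c) ^ (2 - 1) * 1 = 2 * (t - c) := by simp
    rw [e] at h0
    exact h0
  exact h.log (by positivity)

open Real in
lemma aux_subst (φ : ℝ) (hφ : φ ∈ Set.Ioo 0 (π / 2)) :
    ∫ t in (-1:ℝ)..1, sin φ / ((t - cos φ) ^ 2 + sin φ ^ 2) *
      (log ((t - cos φ) ^ 2 + sin φ ^ 2) - log ((t + cos φ) ^ 2 + sin φ ^ 2)) =
    π * log (sin φ) := by
  have hs : 0 < sin φ := sin_pos_of_pos_of_lt_pi hφ.1 (by linarith [hφ.2, pi_pos])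
  have hc : 0 < cos φ := cos_pos_of_mem_Ioo ⟨by linarith [hφ.1, pi_pos], hφ.2⟩
  have h1 := sin_sq_add_cos_sq φ
  have hlog := aux_intlog (cos φ) (by rw [abs_lt]; constructor <;> nlinarith)
  have e1 := aux_arctan1 φ hφ
  have e2 := aux_arctan2 φ hφ
  set s := sin φ with hsd
  set c := cos φ with hcd
  have hpos : ∀ θ : ℝ, 0 < 1 + c ^ 2 + 2 * c * cos θ := by
    intro θ
    have hc1 : 0 < 1 - c := by nlinarith
    nlinarith [mul_nonneg hc.le (by linarith [neg_one_le_cos θ] : (0:ℝ) ≤ 1 + cos θ), mul_pos hc1 hc1]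
  have hcont : Continuous fun θ : ℝ => log (1 + c ^ 2 + 2 * c * cos θ) :=
    Continuous.log (by fun_prop) (fun θ => (hpos θ).ne')
  have key := intervalIntegral.integral_comp_mul_deriv (a := -1) (b := 1)
    (f := fun t => φ - 2 * arctan ((t - c) / s))
    (f' := fun t => -(2 * (s / ((t - c) ^ 2 + s ^ 2))))
    (g := fun θ => 2 * log s - log (1 + c ^ 2 + 2 * c * cos θ))
    (fun t _ => ((aux_dA c s hs t).const_mul 2).const_sub φ)
    (Continuous.continuousOn (by
      have : ∀ t : ℝ, (t - c) ^ 2 + s ^ 2 ≠ 0 := fun t => by positivity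
      fun_prop (disch := assumption)))
    (by fun_prop)
  have hcomp : ∀ t : ℝ, 2 * log s - log (1 + c ^ 2 + 2 * c * cos (φ - 2 * arctan ((t - c) / s)))
      = log ((t - c) ^ 2 + s ^ 2) - log ((t + c) ^ 2 + s ^ 2) := by
    intro t
    have hq : 0 < (t - c) ^ 2 + s ^ 2 := by positivity
    have hp : 0 < (t + c) ^ 2 + s ^ 2 := by positivity
    have e : 1 + c ^ 2 + 2 * c * cos (φ - 2 * arctan ((t - c) / s))
        = s ^ 2 * ((t + c) ^ 2 + s ^ 2) / ((t - c) ^ 2 + s ^ 2) := by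
      have hca := cos_sq_arctan ((t - c) / s)
      have hsa : sin (arctan ((t - c) / s)) = (t - c) / s * cos (arctan ((t - c) / s)) := by
        have := tan_arctan ((t - c) / s)
        rw [tan_eq_sin_div_cos, div_eq_iff (cos_arctan_pos _).ne'] at this
        exact this
      rw [cos_sub, cos_two_mul, sin_two_mul, hsa, ← hsd, ← hcd]
      have hca' : cos (arctan ((t - c) / s)) ^ 2 = s ^ 2 / ((t - c) ^ 2 + s ^ 2) := by
        rw [hca]; field_simp; ring
      rw [show 2 * ((t - c) / s * cos (arctan ((t - c) / s))) * cos (arctan ((t - c) / s)) =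
        2 * ((t - c) / s) * cos (arctan ((t - c) / s)) ^ 2 by ring, hca']
      field_simp
      have : s ^ 2 = 1 - c ^ 2 := by linarith
      rw [this]
      ring
    rw [e, log_div (by positivity) hq.ne', log_mul (by positivity) hp.ne', log_pow]
    push_cast; ring
  have ha : φ - 2 * arctan ((1 - c) / s) = 0 := by rw [e1]; ring
  have hb : φ - 2 * arctan ((-1 - c) / s) = π := by
    rw [show (-1 - c) / s = -((1 + c) / s) by ring, arctan_neg, e2]; ring
  simp only [Function.comp_def, hcomp, ha, hb] at key
  rw [intervalIntegral.integral_symm 0 π, intervalIntegral.integral_sub (by simp)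
    (hcont.intervalIntegrable _ _), hlog] at key
  simp only [intervalIntegral.integral_const, smul_eq_mul] at key
  have : ∀ t : ℝ, s / ((t - c) ^ 2 + s ^ 2) *
      (log ((t - c) ^ 2 + s ^ 2) - log ((t + c) ^ 2 + s ^ 2)) = (-1 / 2) *
      ((log ((t - c) ^ 2 + s ^ 2) - log ((t + c) ^ 2 + s ^ 2)) *
        -(2 * (s / ((t - c) ^ 2 + s ^ 2)))) := by intro t; ring
  simp only [this]
  rw [intervalIntegral.integral_const_mul, key]
  ring

open Real in
lemma aux_aL (φ : ℝ) (hφ : φ ∈ Set.Ioo 0 (π / 2)) :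
    ∫ t in (0:ℝ)..1, (sin φ / ((t - cos φ) ^ 2 + sin φ ^ 2)
        - sin φ / ((t + cos φ) ^ 2 + sin φ ^ 2)) *
      (log ((t - cos φ) ^ 2 + sin φ ^ 2) - log ((t + cos φ) ^ 2 + sin φ ^ 2)) =
    π * log (sin φ) := by
  have hs : 0 < sin φ := sin_pos_of_pos_of_lt_pi hφ.1 (by linarith [hφ.2, pi_pos])
  rw [← aux_subst φ hφ]
  set s := sin φ with hsd
  set c := cos φ with hcd
  have hq : ∀ t : ℝ, (t - c) ^ 2 + s ^ 2 ≠ 0 := fun t => by positivity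
  have hp : ∀ t : ℝ, (t + c) ^ 2 + s ^ 2 ≠ 0 := fun t => by positivity
  have hcont : Continuous fun t : ℝ => s / ((t - c) ^ 2 + s ^ 2) *
      (log ((t - c) ^ 2 + s ^ 2) - log ((t + c) ^ 2 + s ^ 2)) := by
    fun_prop (disch := assumption)
  have hcont2 : Continuous fun t : ℝ => s / ((t + c) ^ 2 + s ^ 2) *
      (log ((t - c) ^ 2 + s ^ 2) - log ((t + c) ^ 2 + s ^ 2)) := by
    fun_prop (disch := assumption)
  rw [← intervalIntegral.integral_add_adjacent_intervals (b := 0) (a := -1)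
    (hcont.intervalIntegrable _ _) (hcont.intervalIntegrable _ _)]
  have h := intervalIntegral.integral_comp_neg (a := 0) (b := 1) (fun t : ℝ => s / ((t - c) ^ 2 + s ^ 2) *
      (log ((t - c) ^ 2 + s ^ 2) - log ((t + c) ^ 2 + s ^ 2)))
  rw [neg_zero] at h
  rw [← h, ← intervalIntegral.integral_add (Continuous.intervalIntegrable (by
    exact hcont.comp continuous_neg) _ _)
    (hcont.intervalIntegrable _ _)]
  congr 1
  funext t
  rw [show (-t - c) ^ 2 = (t + c) ^ 2 by ring, show (-t + c) ^ 2 = (t - c) ^ 2 by ring]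
  ring

open Real in
lemma aux_p (φ : ℝ) : p₁ φ = cos φ + sin φ * Complex.I ∧ p₄ φ = cos φ - sin φ * Complex.I := by
  constructor
  · rw [p₁, mul_comm, Complex.exp_mul_I]; push_cast; rfl
  · rw [p₄, mul_comm, ← neg_mul, Complex.exp_mul_I]; push_cast; simp [sub_eq_add_neg]

lemma aux_pair (x s : ℝ) (hs : 0 < s) :
    1 / ((x : ℂ) - s * Complex.I) = ((x / (x ^ 2 + s ^ 2) : ℝ) : ℂ)
      + ((s / (x ^ 2 + s ^ 2) : ℝ) : ℂ) * Complex.I ∧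
    1 / ((x : ℂ) + s * Complex.I) = ((x / (x ^ 2 + s ^ 2) : ℝ) : ℂ)
      - ((s / (x ^ 2 + s ^ 2) : ℝ) : ℂ) * Complex.I := by
  have h : (x : ℂ) ^ 2 + (s : ℂ) ^ 2 ≠ 0 := by
    have : x ^ 2 + s ^ 2 ≠ 0 := by positivity
    exact_mod_cast this
  have hf : ((x : ℂ) - s * Complex.I) * (x + s * Complex.I) = x ^ 2 + s ^ 2 := by
    linear_combination -(s : ℂ) ^ 2 * Complex.I_sq
  have h1 : (x : ℂ) - s * Complex.I ≠ 0 := by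
    intro h0; rw [h0, zero_mul] at hf; exact h hf.symm
  have h2 : (x : ℂ) + s * Complex.I ≠ 0 := by
    intro h0; rw [h0, mul_zero] at hf; exact h hf.symm
  push_cast
  constructor
  · rw [div_eq_iff h1]; field_simp; linear_combination -hf
  · rw [div_eq_iff h2]; field_simp; linear_combination -hf

open Real in
lemma aux_F (φ : ℝ) (hs : 0 < sin φ) (t : ℝ) :
    Fa φ t = 2 * Complex.I * ((sin φ / ((t - cos φ) ^ 2 + sin φ ^ 2)
        - sin φ / ((t + cos φ) ^ 2 + sin φ ^ 2) : ℝ) : ℂ) ∧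
    Fb φ t = ((2 * (t - cos φ) / ((t - cos φ) ^ 2 + sin φ ^ 2)
        - 2 * (t + cos φ) / ((t + cos φ) ^ 2 + sin φ ^ 2) : ℝ) : ℂ) := by
  obtain ⟨h1, h4⟩ := aux_p φ
  have h2 : p₂ φ = -p₄ φ := rfl
  have h3 : p₃ φ = -p₁ φ := rfl
  obtain ⟨a1, a2⟩ := aux_pair (t - cos φ) (sin φ) hs
  obtain ⟨b1, b2⟩ := aux_pair (t + cos φ) (sin φ) hs
  have r1 : (t : ℂ) - p₁ φ = ((t - cos φ : ℝ) : ℂ) - (sin φ : ℝ) * Complex.I := by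
    rw [h1]; push_cast; ring
  have r4 : (t : ℂ) - p₄ φ = ((t - cos φ : ℝ) : ℂ) + (sin φ : ℝ) * Complex.I := by
    rw [h4]; push_cast; ring
  have r2 : (t : ℂ) - p₂ φ = ((t + cos φ : ℝ) : ℂ) - (sin φ : ℝ) * Complex.I := by
    rw [h2, h4]; push_cast; ring
  have r3 : (t : ℂ) - p₃ φ = ((t + cos φ : ℝ) : ℂ) + (sin φ : ℝ) * Complex.I := by
    rw [h3, h1]; push_cast; ring
  rw [Fa, Fb, r1, r2, r3, r4, a1, a2, b1, b2]
  constructor <;> push_cast <;> ring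

theorem stmt_8 (φ : ℝ) (hφ : φ ∈ Set.Ioo 0 (Real.pi / 2)) :
    (∫ t in (0:ℝ)..1,
        (Fa φ (t : ℂ) * (∫ s in (0:ℝ)..t, Fb φ (s : ℂ)) -
          Fb φ (t : ℂ) * (∫ s in (0:ℝ)..t, Fa φ (s : ℂ)))) =
      4 * (Real.pi : ℂ) * Complex.I * ((Real.log (Real.sin φ) : ℝ) : ℂ) -
        Complex.I * ((Real.pi : ℂ) - 2 * (φ : ℂ)) *
          ((Real.log ((1 - Real.cos φ) / (1 + Real.cos φ)) : ℝ) : ℂ) := by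
  have hs : 0 < Real.sin φ :=
    Real.sin_pos_of_pos_of_lt_pi hφ.1 (by linarith [hφ.2, Real.pi_pos])
  have hc : 0 < Real.cos φ := Real.cos_pos_of_mem_Ioo ⟨by linarith [hφ.1, Real.pi_pos], hφ.2⟩
  have h1 := Real.sin_sq_add_cos_sq φ
  have hFa := fun t => (aux_F φ hs t).1
  have hFb := fun t => (aux_F φ hs t).2
  have haL := aux_aL φ hφ
  have e1 := aux_arctan1 φ hφ
  have e2 := aux_arctan2 φ hφ
  have e3 := aux_arctan3 φ hφ
  simp only [hFa, hFb]
  set s := Real.sin φ with hsd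
  set c := Real.cos φ with hcd
  have hq : ∀ t : ℝ, (t - c) ^ 2 + s ^ 2 ≠ 0 := fun t => by positivity
  have hp : ∀ t : ℝ, (t + c) ^ 2 + s ^ 2 ≠ 0 := fun t => by positivity
  set a : ℝ → ℝ := fun t => s / ((t - c) ^ 2 + s ^ 2) - s / ((t + c) ^ 2 + s ^ 2) with had
  set b : ℝ → ℝ := fun t =>
    2 * (t - c) / ((t - c) ^ 2 + s ^ 2) - 2 * (t + c) / ((t + c) ^ 2 + s ^ 2) with hbd
  set L : ℝ → ℝ := fun t =>
    Real.log ((t - c) ^ 2 + s ^ 2) - Real.log ((t + c) ^ 2 + s ^ 2) with hLd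
  set A : ℝ → ℝ := fun t =>
    Real.arctan ((t - c) / s) - Real.arctan ((t + c) / s) + 2 * Real.arctan (c / s) with hAd
  have hca : Continuous a := by fun_prop (disch := assumption)
  have hcb : Continuous b := by fun_prop (disch := assumption)
  have hdL : ∀ t, HasDerivAt L (b t) t := fun t => by
    have := (aux_dL c s hs t).sub (aux_dL (-c) s hs t)
    simp only [sub_neg_eq_add] at this
    exact this
  have hdA : ∀ t, HasDerivAt A (a t) t := fun t => by
    have := ((aux_dA c s hs t).sub (aux_dA (-c) s hs t)).add_const (2 * Real.arctan (c / s))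
    simp only [sub_neg_eq_add] at this
    exact this
  have hcL : Continuous L := continuous_iff_continuousAt.2 fun t => (hdL t).continuousAt
  have hcA : Continuous A := continuous_iff_continuousAt.2 fun t => (hdA t).continuousAt
  have hL0 : L 0 = 0 := by simp [hLd]
  have hA0 : A 0 = 0 := by
    simp only [hAd, zero_sub, zero_add, neg_div, Real.arctan_neg]; ring
  have hA1 : A 1 = Real.pi / 2 - φ := by
    simp only [hAd]; rw [e1, e2, e3]; ring
  have hL1 : L 1 = Real.log ((1 - c) / (1 + c)) := by
    have hc1 : 0 < 1 - c := by nlinarith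
    simp only [hLd]
    rw [show (1 - c) ^ 2 + s ^ 2 = 2 * (1 - c) by nlinarith,
      show (1 + c) ^ 2 + s ^ 2 = 2 * (1 + c) by nlinarith,
      Real.log_mul (by norm_num) hc1.ne', Real.log_mul (by norm_num) (by positivity),
      Real.log_div hc1.ne' (by positivity)]
    ring
  have hib : ∀ t : ℝ, ∫ x in (0:ℝ)..t, ((b x : ℝ) : ℂ) = (L t : ℂ) := fun t => by
    rw [intervalIntegral.integral_ofReal, intervalIntegral.integral_eq_sub_of_hasDerivAt
      (fun x _ => hdL x) (hcb.intervalIntegrable _ _), hL0, sub_zero]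
  have hia : ∀ t : ℝ, ∫ x in (0:ℝ)..t, 2 * Complex.I * ((a x : ℝ) : ℂ)
      = 2 * Complex.I * (A t : ℂ) := fun t => by
    rw [intervalIntegral.integral_const_mul, intervalIntegral.integral_ofReal,
      intervalIntegral.integral_eq_sub_of_hasDerivAt
      (fun x _ => hdA x) (hca.intervalIntegrable _ _), hA0, sub_zero]
  change (∫ t in (0:ℝ)..1, (2 * Complex.I * ((a t : ℝ) : ℂ) * (∫ x in (0:ℝ)..t, ((b x : ℝ) : ℂ)) -
    ((b t : ℝ) : ℂ) * ∫ x in (0:ℝ)..t, 2 * Complex.I * ((a x : ℝ) : ℂ))) = _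
  simp only [hib, hia]
  have hparts := intervalIntegral.integral_deriv_mul_eq_sub (a := 0) (b := 1)
    (fun x _ => hdA x) (fun x _ => hdL x)
    (hca.intervalIntegrable _ _) (hcb.intervalIntegrable _ _)
  have hre : ∀ t : ℝ, 2 * Complex.I * ((a t : ℝ) : ℂ) * (L t : ℂ) -
      ((b t : ℝ) : ℂ) * (2 * Complex.I * (A t : ℂ)) =
      2 * Complex.I * ((2 * (a t * L t) - (a t * L t + A t * b t) : ℝ) : ℂ) := fun t => by
    push_cast; ring
  simp only [hre]
  have haL' : ∫ t in (0:ℝ)..1, a t * L t = Real.pi * Real.log s := haL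
  rw [intervalIntegral.integral_const_mul, intervalIntegral.integral_ofReal,
    intervalIntegral.integral_sub
      (Continuous.intervalIntegrable (by fun_prop) _ _)
      (Continuous.intervalIntegrable (by fun_prop) _ _),
    intervalIntegral.integral_const_mul, haL', hparts, hA1, hL1, hA0, hL0]
  push_cast
  ring
end
end

section
/- Let φ ∈ (0, π/2) and, along the segment from 0 to i parametrized as z = it, define Ω_a(t) = ∫₀ᵗ F_a(is)·i ds and Ω_c(t) = ∫₀ᵗ F_c(is)·i ds for t ∈ [0,1]. Then ∫₀¹ (F_a(it)·Ω_c(t) − F_c(it)·Ω_a(t))·i dt = −4πi·log(cos φ) + 2iφ·log((1 − sin φ)/(1 + sin φ)). -/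
noncomputable section

open MeasureTheory

theorem h_den (k t : ℝ) (hk : k^2 < 1) : 0 < (1+t^2)^2 - 4*k^2*t^2 := by
  nlinarith [sq_nonneg (t^2-1), sq_nonneg t, mul_nonneg (sub_nonneg.2 hk.le) (sq_nonneg t), sq_nonneg (t^2), mul_self_nonneg (1-t^2), sq_nonneg (k*t)]

theorem h_lin (k t : ℝ) (hk : k^2 < 1) : 0 < 1 + 2*k*t + t^2 := by
  nlinarith [sq_nonneg (t+k)]

theorem h_inner (k r : ℝ) (hr : 0 < r) (h : r^2 + k^2 = 1) :
    ∫ t in (0:ℝ)..1, (1+t^2)/((1+t^2)^2 - 4*k^2*t^2) = Real.pi/(4*r) := by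
  have hk : k^2 < 1 := by nlinarith
  have hd : ∀ t ∈ Set.uIcc (0:ℝ) 1, HasDerivAt
      (fun t => (1/(2*r)) * (Real.arctan ((t+k)/r) + Real.arctan ((t-k)/r)))
      ((1+t^2)/((1+t^2)^2 - 4*k^2*t^2)) t := by
    intro t _
    have h1 := (((hasDerivAt_id t).add_const k).div_const r).arctan
    have h2 := (((hasDerivAt_id t).sub_const k).div_const r).arctan
    refine ((h1.add h2).const_mul (1/(2*r))).congr_deriv ?_
    symm
    have e1 := h_den k t hk
    have e2 := h_lin k t hk
    have e3 := h_lin (-k) t (by simpa using hk)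
    have f1 : 1 + ((t+k)/r)^2 = (1+2*k*t+t^2)/r^2 := by field_simp; linear_combination h
    have f2 : 1 + ((t-k)/r)^2 = (1+2*(-k)*t+t^2)/r^2 := by field_simp; linear_combination h
    simp only [id, Pi.add_apply]
    rw [f1, f2]
    have e2' := e2.ne'
    have e3' := e3.ne'
    have : (1+t^2)^2 - 4*k^2*t^2 = (1+2*k*t+t^2)*(1+2*(-k)*t+t^2) := by ring
    rw [this]
    generalize hX : 1+2*k*t+t^2 = X at *
    generalize hY : 1+2*(-k)*t+t^2 = Y at *
    have : 1 + t^2 = (X+Y)/2 := by rw [← hX, ← hY]; ring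
    rw [this]
    field_simp
    ring
  rw [intervalIntegral.integral_eq_sub_of_hasDerivAt hd]
  · have hk1 : 0 < 1 + k := by nlinarith
    have hk2 : 0 < 1 - k := by nlinarith
    have : (1-k)/r = ((1+k)/r)⁻¹ := by
      field_simp; linear_combination -h
    rw [this, Real.arctan_inv_of_pos (by positivity)]
    rw [zero_add, zero_sub, neg_div, Real.arctan_neg]
    field_simp; ring
  · apply Continuous.intervalIntegrable
    apply Continuous.div (by fun_prop) (by fun_prop)
    intro t; exact (h_den k t hk).ne'

theorem h_logrep (s t : ℝ) (hs : s^2 < 1) :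
    ∫ y in (0:ℝ)..1, 4*s*t*(1+t^2)/((1+t^2)^2 - 4*(s*y)^2*t^2) =
      Real.log (1+2*s*t+t^2) - Real.log (1-2*s*t+t^2) := by
  have hy : ∀ y ∈ Set.uIcc (0:ℝ) 1, (s*y)^2 < 1 := by
    intro y hy
    rw [Set.uIcc_of_le zero_le_one] at hy
    have : y^2 ≤ 1 := by nlinarith [hy.1, hy.2]
    nlinarith [sq_nonneg s]
  have hd : ∀ y ∈ Set.uIcc (0:ℝ) 1, HasDerivAt
      (fun y => Real.log (1+2*(s*y)*t+t^2) - Real.log (1+2*(-(s*y))*t+t^2))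
      (4*s*t*(1+t^2)/((1+t^2)^2 - 4*(s*y)^2*t^2)) y := by
    intro y hy'
    have e2 := h_lin _ t (hy y hy')
    have e3 := h_lin (-(s*y)) t (by simpa using hy y hy')
    have g1 : HasDerivAt (fun y : ℝ => 1+2*(s*y)*t+t^2) (2*s*t) y := by
      exact ((((((hasDerivAt_id y).const_mul s).const_mul 2).mul_const t).const_add 1).add_const (t^2)).congr_deriv (by ring)
    have g2 : HasDerivAt (fun y : ℝ => 1+2*(-(s*y))*t+t^2) (-(2*s*t)) y := by
      exact (((((((hasDerivAt_id y).const_mul s).neg).const_mul 2).mul_const t).const_add 1).add_const (t^2)).congr_deriv (by ring)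
    refine ((g1.log e2.ne').sub (g2.log e3.ne')).congr_deriv ?_
    symm
    have : (1+t^2)^2 - 4*(s*y)^2*t^2 = (1+2*(s*y)*t+t^2)*(1+2*(-(s*y))*t+t^2) := by ring
    rw [this]
    have e2' := e2.ne'
    have e3' := e3.ne'
    rw [div_sub_div _ _ e2' e3']
    congr 1; ring
  rw [intervalIntegral.integral_eq_sub_of_hasDerivAt hd]
  · simp; ring_nf
  · apply ContinuousOn.intervalIntegrable
    apply ContinuousOn.div (by fun_prop) (by fun_prop)
    intro y h'; exact (h_den _ t (hy y h')).ne'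

theorem h_outer (s c : ℝ) (hc : 0 < c) (h : s^2 + c^2 = 1) :
    ∫ y in (0:ℝ)..1, s^2/(√(1-(s*y)^2) * (√(1-(s*y)^2)+c)) = - Real.log c := by
  have hy : ∀ y ∈ Set.uIcc (0:ℝ) 1, 0 < 1 - (s*y)^2 := by
    intro y hy
    rw [Set.uIcc_of_le zero_le_one] at hy
    have : y^2 ≤ 1 := by nlinarith [hy.1, hy.2]
    nlinarith [sq_nonneg s]
  have hd : ∀ y ∈ Set.uIcc (0:ℝ) 1, HasDerivAt
      (fun y => Real.log (1+y) - Real.log (√(1-(s*y)^2) + c*y))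
      (s^2/(√(1-(s*y)^2) * (√(1-(s*y)^2)+c))) y := by
    intro y hy'
    have e := hy y hy'
    rw [Set.uIcc_of_le zero_le_one] at hy'
    have hy0 := hy'.1
    have g0 : HasDerivAt (fun y : ℝ => 1-(s*y)^2) (-(2*s^2*y)) y := by
      have := ((hasDerivAt_id y).const_mul s).pow 2 |>.const_sub 1
      exact this.congr_deriv (by simp; ring)
    have g1 := (g0.sqrt e.ne').add ((hasDerivAt_id y).const_mul c)
    have g2 := (hasDerivAt_id y).const_add 1
    have hr : 0 < √(1-(s*y)^2) := Real.sqrt_pos.2 e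
    have hr2 : √(1-(s*y)^2)^2 = 1-(s*y)^2 := Real.sq_sqrt e.le
    have p1 : 0 < √(1-(s*y)^2) + c*y := by positivity
    have p2 : 0 < 1 + y := by positivity
    refine ((g2.log (by simpa using p2.ne')).sub (g1.log (by simpa using p1.ne'))).congr_deriv ?_
    symm
    simp only [id, Pi.add_apply]
    generalize √(1-(s*y)^2) = r at *
    have : r + c ≠ 0 := by positivity
    have p1' := p1.ne'
    have p2' := p2.ne'
    field_simp
    have hs : s^2 = 1 - c^2 := by linarith
    have hr2' : r^2 = 1 - (1-c^2)*y^2 := by rw [hr2, ← hs]; ring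
    rw [hs]
    linear_combination (-r)*hr2'
  rw [intervalIntegral.integral_eq_sub_of_hasDerivAt hd]
  · have : 1 - (s*1)^2 = c^2 := by linear_combination -h
    rw [this, Real.sqrt_sq hc.le]
    have : c + c*1 = 2*c := by ring
    rw [this, Real.log_mul two_ne_zero hc.ne']
    norm_num
  · apply ContinuousOn.intervalIntegrable
    apply ContinuousOn.div (by fun_prop) (by fun_prop)
    intro y h'
    have := Real.sqrt_pos.2 (hy y h')
    positivity

theorem h_J (s c : ℝ) (hc : 0 < c) (h : s^2 + c^2 = 1) :
    ∫ t in (0:ℝ)..1, (8*s*c*t/((1+t^2)^2 - 4*s^2*t^2)) *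
      (Real.log (1+2*s*t+t^2) - Real.log (1-2*s*t+t^2)) = -(2*Real.pi) * Real.log c := by
  have hs : s^2 < 1 := by nlinarith
  have hy : ∀ y ∈ Set.uIcc (0:ℝ) 1, (s*y)^2 < 1 := by
    intro y hy
    rw [Set.uIcc_of_le zero_le_one] at hy
    have : y^2 ≤ 1 := by nlinarith [hy.1, hy.2]
    nlinarith [sq_nonneg s]
  have e1 : ∀ t : ℝ, (8*s*c*t/((1+t^2)^2 - 4*s^2*t^2)) *
      (Real.log (1+2*s*t+t^2) - Real.log (1-2*s*t+t^2)) =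
      ∫ y in (0:ℝ)..1, (8*s*c*t/((1+t^2)^2 - 4*s^2*t^2)) *
        (4*s*t*(1+t^2)/((1+t^2)^2 - 4*(s*y)^2*t^2)) := by
    intro t
    rw [intervalIntegral.integral_const_mul, h_logrep s t hs]
  simp_rw [e1]
  rw [intervalIntegral_intervalIntegral_swap]
  · have e2 : ∀ᵐ y : ℝ, y ∈ Set.uIoc (0:ℝ) 1 →
        (∫ t in (0:ℝ)..1, (8*s*c*t/((1+t^2)^2 - 4*s^2*t^2)) *
        (4*s*t*(1+t^2)/((1+t^2)^2 - 4*(s*y)^2*t^2))) =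
        (2*Real.pi) * (s^2/(√(1-(s*y)^2) * (√(1-(s*y)^2)+c))) := by
      have : ∀ᵐ y : ℝ, y ≠ 1 := by simp [ae_iff]
      filter_upwards [this] with y hy1 hym
      have hyy := hy y (Set.uIoc_subset_uIcc hym)
      rw [Set.uIoc_of_le zero_le_one] at hym
      have hlt : y < 1 := lt_of_le_of_ne hym.2 hy1
      have hy2 : 0 < 1 - y^2 := by nlinarith [hym.1]
      have e3 : ∀ t : ℝ, (8*s*c*t/((1+t^2)^2 - 4*s^2*t^2)) *
        (4*s*t*(1+t^2)/((1+t^2)^2 - 4*(s*y)^2*t^2)) = (8*c/(1-y^2)) *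
          ((1+t^2)/((1+t^2)^2 - 4*s^2*t^2) - (1+t^2)/((1+t^2)^2 - 4*(s*y)^2*t^2)) := by
        intro t
        have d1 := (h_den s t hs).ne'
        have d2 := (h_den (s*y) t hyy).ne'
        have d3 := hy2.ne'
        rw [div_sub_div _ _ d1 d2, div_mul_div_comm, div_mul_div_comm,
          div_eq_div_iff (mul_ne_zero d1 d2) (mul_ne_zero d3 (mul_ne_zero d1 d2))]
        ring
      have hr : 0 < √(1-(s*y)^2) := Real.sqrt_pos.2 (by linarith)
      have hr2 : √(1-(s*y)^2)^2 = 1-(s*y)^2 := Real.sq_sqrt (by linarith)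
      simp_rw [e3]
      have ci : ∀ k : ℝ, k^2 < 1 → IntervalIntegrable
          (fun t : ℝ => (1+t^2)/((1+t^2)^2 - 4*k^2*t^2)) volume 0 1 := by
        intro k hk
        apply Continuous.intervalIntegrable
        apply Continuous.div (by fun_prop) (by fun_prop)
        intro t; exact (h_den k t hk).ne'
      rw [intervalIntegral.integral_const_mul,
        intervalIntegral.integral_sub (ci s hs) (ci (s*y) hyy),
        h_inner s c hc (by linarith), h_inner (s*y) _ hr (by linarith)]
      generalize √(1-(s*y)^2) = r at *
      have : r + c ≠ 0 := by positivity
      field_simp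
      linear_combination 8*hr2 - 8*h
    rw [intervalIntegral.integral_congr_ae e2, intervalIntegral.integral_const_mul,
      h_outer s c hc h]
    ring
  · apply IntegrableOn.mono_set (t := Set.uIcc (0:ℝ) 1 ×ˢ Set.uIcc (0:ℝ) 1)
    · apply ContinuousOn.integrableOn_compact (isCompact_uIcc.prod isCompact_uIcc)
      simp only [Function.uncurry_def]
      apply ContinuousOn.mul
      · apply ContinuousOn.div (by fun_prop) (by fun_prop)
        intro p _; exact (h_den s p.1 hs).ne'
      · apply ContinuousOn.div (by fun_prop) (by fun_prop)
        intro p hp; exact (h_den (s*p.2) p.1 (hy _ hp.2)).ne'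
    · exact Set.prod_mono Set.uIoc_subset_uIcc Set.uIoc_subset_uIcc

theorem h_C (s : ℝ) (hs : s^2 < 1) (t : ℝ) : HasDerivAt
    (fun t => Real.log (1+2*s*t+t^2) - Real.log (1-2*s*t+t^2))
    (4*s*(1-t^2)/((1+t^2)^2 - 4*s^2*t^2)) t := by
  have e2 := h_lin s t hs
  have e3 : 0 < 1-2*s*t+t^2 := by have := h_lin (-s) t (by simpa using hs); linarith
  have g1 : HasDerivAt (fun t : ℝ => 1+2*s*t+t^2) (2*s+2*t) t :=
    ((((hasDerivAt_id t).const_mul (2*s)).const_add 1).add (hasDerivAt_pow 2 t)).congr_deriv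
      (by simp)
  have g2 : HasDerivAt (fun t : ℝ => 1-2*s*t+t^2) (-(2*s)+2*t) t :=
    ((((hasDerivAt_id t).const_mul (2*s)).const_sub 1).add (hasDerivAt_pow 2 t)).congr_deriv
      (by simp)
  refine ((g1.log e2.ne').sub (g2.log e3.ne')).congr_deriv ?_
  have : (1+t^2)^2 - 4*s^2*t^2 = (1+2*s*t+t^2)*(1-2*s*t+t^2) := by ring
  rw [this, div_sub_div _ _ e2.ne' e3.ne']
  congr 1; ring

theorem h_A (s c : ℝ) (hs0 : 0 < s) (hc : 0 < c) (h : s^2 + c^2 = 1) (K t : ℝ) : HasDerivAt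
    (fun t => -2*(Real.arctan ((t^2+(1-2*s^2))/(2*s*c)) - K))
    (-(8*s*c*t/((1+t^2)^2 - 4*s^2*t^2))) t := by
  have hs : s^2 < 1 := by nlinarith
  have g := (((((hasDerivAt_pow 2 t).add_const (1-2*s^2)).div_const (2*s*c)).arctan).sub_const K).const_mul (-2)
  refine g.congr_deriv ?_
  have d := (h_den s t hs).ne'
  have : 1 + ((t^2+(1-2*s^2))/(2*s*c))^2 = ((1+t^2)^2 - 4*s^2*t^2)/(2*s*c)^2 := by
    field_simp
    linear_combination 4*s^2*h
  rw [this]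
  field_simp
  push_cast
  ring

theorem h_alg (a b z : ℂ) (hab : a*b = 1) (h1 : z - a ≠ 0) (h2 : z + b ≠ 0) (h3 : z + a ≠ 0)
    (h4 : z - b ≠ 0) :
    (1/(z-a) - 1/(z+b) + 1/(z+a) - 1/(z-b) = 2*z*(a^2-b^2)/((1-z^2)^2-(a-b)^2*z^2)) ∧
    (1/(z-a) + 1/(z+b) - 1/(z+a) - 1/(z-b) = 2*(a-b)*(1+z^2)/((1-z^2)^2-(a-b)^2*z^2)) := by
  have : (1-z^2)^2-(a-b)^2*z^2 = (z-a)*(z+b)*(z+a)*(z-b) := by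
    linear_combination (2*z^2 - 1 - a*b)*hab
  rw [this]
  constructor
  · field_simp
    ring
  · field_simp
    linear_combination (2*(a-b))*hab

theorem h_p₁ (φ : ℝ) : p₁ φ = (Real.cos φ : ℂ) + Complex.I * (Real.sin φ : ℂ) := by
  rw [p₁, mul_comm, Complex.exp_mul_I]; push_cast; ring
theorem h_p₄ (φ : ℝ) : p₄ φ = (Real.cos φ : ℂ) - Complex.I * (Real.sin φ : ℂ) := by
  rw [p₄, mul_comm, ← neg_mul, Complex.exp_mul_I]; simp; ring

theorem h_F (φ : ℝ) (hc : 0 < Real.cos φ) (t : ℝ) :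
    Fa φ (Complex.I * t) = ((-(8*Real.sin φ*Real.cos φ*t/((1+t^2)^2 - 4*Real.sin φ^2*t^2)) : ℝ) : ℂ) ∧
    Fc φ (Complex.I * t) = Complex.I *
      ((4*Real.sin φ*(1-t^2)/((1+t^2)^2 - 4*Real.sin φ^2*t^2) : ℝ) : ℂ) := by
  have h := Real.sin_sq_add_cos_sq φ
  have hp2 : p₂ φ = - p₄ φ := rfl
  have hI := Complex.I_sq
  have hsq : ((Real.sin φ : ℂ))^2 + (Real.cos φ : ℂ)^2 = 1 := by exact_mod_cast h
  have key := h_alg (p₁ φ) (p₄ φ) (Complex.I * t) ?_ ?_ ?_ ?_ ?_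
  · unfold Fa Fc
    rw [hp2, p₃, sub_neg_eq_add, sub_neg_eq_add, key.1, key.2, h_p₁, h_p₄]
    generalize Real.cos φ = c at *
    generalize Real.sin φ = s at *
    have hD : (1-(Complex.I*t)^2)^2-((c:ℂ)+Complex.I*s-(c-Complex.I*s))^2*(Complex.I*t)^2
        = (1+(t:ℂ)^2)^2 - 4*s^2*t^2 := by
      linear_combination (-2*(t:ℂ)^2 + (Complex.I^2-1)*t^4 - 4*s^2*t^2*(Complex.I^2-1))*hI
    rw [hD]
    push_cast
    constructor
    · rw [← neg_div]; congr 1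
      linear_combination (8*(s:ℂ)*c*t)*hI
    · rw [← mul_div_assoc]; congr 1
      linear_combination (4*Complex.I*(s:ℂ)*t^2)*hI
  · rw [h_p₁, h_p₄]; linear_combination hsq - (Real.sin φ : ℂ)^2*hI
  all_goals
    intro h0
    have := congrArg Complex.re h0
    simp [h_p₁, h_p₄] at this
    rw [← Complex.ofReal_cos, Complex.ofReal_re] at this
    linarith

theorem h_C0 (s : ℝ) (hs : s^2 < 1) (t : ℝ) :
    ∫ u in (0:ℝ)..t, 4*s*(1-u^2)/((1+u^2)^2 - 4*s^2*u^2) =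
      Real.log (1+2*s*t+t^2) - Real.log (1-2*s*t+t^2) := by
  rw [intervalIntegral.integral_eq_sub_of_hasDerivAt (fun u _ => h_C s hs u)]
  · simp
  · apply Continuous.intervalIntegrable
    apply Continuous.div (by fun_prop) (by fun_prop)
    intro t; exact (h_den s t hs).ne'

theorem h_A0 (s c : ℝ) (hs0 : 0 < s) (hc : 0 < c) (h : s^2 + c^2 = 1) (t : ℝ) :
    ∫ u in (0:ℝ)..t, -(8*s*c*u/((1+u^2)^2 - 4*s^2*u^2)) =
      -2*(Real.arctan ((t^2+(1-2*s^2))/(2*s*c)) - Real.arctan ((1-2*s^2)/(2*s*c))) := by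
  have hs : s^2 < 1 := by nlinarith
  rw [intervalIntegral.integral_eq_sub_of_hasDerivAt
    (fun u _ => h_A s c hs0 hc h (Real.arctan ((1-2*s^2)/(2*s*c))) u)]
  · simp
  · apply Continuous.intervalIntegrable
    apply Continuous.neg
    apply Continuous.div (by fun_prop) (by fun_prop)
    intro t; exact (h_den s t hs).ne'

theorem h_real (φ : ℝ) (hφ : φ ∈ Set.Ioo 0 (Real.pi / 2)) :
    ∫ t in (0:ℝ)..1, ((8*Real.sin φ*Real.cos φ*t/((1+t^2)^2 - 4*Real.sin φ^2*t^2)) *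
       (∫ u in (0:ℝ)..t, 4*Real.sin φ*(1-u^2)/((1+u^2)^2 - 4*Real.sin φ^2*u^2)) +
      (4*Real.sin φ*(1-t^2)/((1+t^2)^2 - 4*Real.sin φ^2*t^2)) *
       (∫ u in (0:ℝ)..t, -(8*Real.sin φ*Real.cos φ*u/((1+u^2)^2 - 4*Real.sin φ^2*u^2)))) =
    -4 * Real.pi * Real.log (Real.cos φ) +
      2 * φ * Real.log ((1 - Real.sin φ) / (1 + Real.sin φ)) := by
  obtain ⟨h0, h1⟩ := hφ
  have hs0 : 0 < Real.sin φ := Real.sin_pos_of_pos_of_lt_pi h0 (by linarith)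
  have hc : 0 < Real.cos φ := Real.cos_pos_of_mem_Ioo ⟨by linarith, h1⟩
  have h := Real.sin_sq_add_cos_sq φ
  have hat0 : Real.arctan ((1-2*Real.sin φ^2)/(2*Real.sin φ*Real.cos φ)) = Real.pi/2 - 2*φ := by
    apply Real.arctan_eq_of_tan_eq
    · rw [Real.tan_pi_div_two_sub, Real.tan_eq_sin_div_cos, inv_div, Real.sin_two_mul,
        Real.cos_two_mul]
      congr 1; linear_combination 2*h
    · constructor <;> linarith
  have hat1 : Real.arctan ((1^2+(1-2*Real.sin φ^2))/(2*Real.sin φ*Real.cos φ)) = Real.pi/2 - φ := by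
    apply Real.arctan_eq_of_tan_eq
    · rw [Real.tan_pi_div_two_sub, Real.tan_eq_sin_div_cos, inv_div]
      field_simp; linear_combination 2*h
    · constructor <;> linarith
  have hJ := h_J _ _ hc h
  generalize Real.cos φ = c at *
  generalize Real.sin φ = s at *
  have hs : s^2 < 1 := by nlinarith
  simp_rw [h_C0 s hs, h_A0 s c hs0 hc h, hat0]
  have hd : ∀ t ∈ Set.uIcc (0:ℝ) 1, HasDerivAt
     (fun t => (Real.log (1+2*s*t+t^2) - Real.log (1-2*s*t+t^2)) *
       (-2*(Real.arctan ((t^2+(1-2*s^2))/(2*s*c)) - (Real.pi/2-2*φ)))) _ t :=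
    fun t _ => (h_C s hs t).mul (h_A s c hs0 hc h (Real.pi/2-2*φ) t)
  have c1 : Continuous (fun t : ℝ => 8*s*c*t/((1+t^2)^2 - 4*s^2*t^2)) := by
    apply Continuous.div (by fun_prop) (by fun_prop)
    intro t; exact (h_den s t hs).ne'
  have c2 : Continuous (fun t : ℝ => 4*s*(1-t^2)/((1+t^2)^2 - 4*s^2*t^2)) := by
    apply Continuous.div (by fun_prop) (by fun_prop)
    intro t; exact (h_den s t hs).ne'
  have c3 : Continuous (fun t => Real.log (1+2*s*t+t^2) - Real.log (1-2*s*t+t^2)) :=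
    continuous_iff_continuousAt.2 fun t => (h_C s hs t).continuousAt
  have c4 : Continuous (fun t => -2*(Real.arctan ((t^2+(1-2*s^2))/(2*s*c)) - (Real.pi/2-2*φ))) :=
    continuous_iff_continuousAt.2 fun t => (h_A s c hs0 hc h (Real.pi/2-2*φ) t).continuousAt
  have ci := ((c2.mul c4).add (c3.mul c1.neg)).intervalIntegrable (μ := volume) 0 1
  have ftc := intervalIntegral.integral_eq_sub_of_hasDerivAt hd ci
  have ci2 := ((c1.mul c3).const_mul 2).intervalIntegrable (μ := volume) 0 1
  have := intervalIntegral.integral_add ci ci2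
  rw [intervalIntegral.integral_const_mul] at this
  refine Eq.trans (intervalIntegral.integral_congr (fun t _ => ?_)) (this.trans ?_)
  · simp only [Pi.add_apply, Pi.mul_apply, Pi.neg_apply]
    ring
  · refine (congrArg₂ (· + ·) ftc (congrArg (2 * ·) hJ)).trans ?_
    beta_reduce
    rw [hat1]
    have hs1 : 0 < 1 - s := by nlinarith
    have q1 : Real.log (1+2*s*1+1^2) = Real.log 2 + Real.log (1+s) := by
      rw [← Real.log_mul two_ne_zero (by positivity)]; congr 1; ring
    have q2 : Real.log (1-2*s*1+1^2) = Real.log 2 + Real.log (1-s) := by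
      rw [← Real.log_mul two_ne_zero (by positivity)]; congr 1; ring
    rw [q1, q2, Real.log_div (by positivity) (by positivity)]
    simp
    ring

/- STATEMENT 9: along the segment from `0` to `i` parametrized as `z = it`, with
`Ω_a(t) = ∫₀ᵗ F_a(is)·i ds` and `Ω_c(t) = ∫₀ᵗ F_c(is)·i ds`,
`∫₀¹ (F_a(it) Ω_c(t) - F_c(it) Ω_a(t))·i dt
  = -4πi log(cos φ) + 2iφ log((1-sin φ)/(1+sin φ))`. -/
theorem stmt_9 (φ : ℝ) (hφ : φ ∈ Set.Ioo 0 (Real.pi / 2)) :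
    (∫ t in (0:ℝ)..1,
        (Fa φ (Complex.I * (t : ℂ)) *
            (∫ s in (0:ℝ)..t, Fc φ (Complex.I * (s : ℂ)) * Complex.I) -
          Fc φ (Complex.I * (t : ℂ)) *
            (∫ s in (0:ℝ)..t, Fa φ (Complex.I * (s : ℂ)) * Complex.I)) * Complex.I) =
      -4 * (Real.pi : ℂ) * Complex.I * ((Real.log (Real.cos φ) : ℝ) : ℂ) +
        2 * Complex.I * (φ : ℂ) *
          ((Real.log ((1 - Real.sin φ) / (1 + Real.sin φ)) : ℝ) : ℂ) := by
  have hc : 0 < Real.cos φ := Real.cos_pos_of_mem_Ioo ⟨by linarith [hφ.1, Real.pi_pos], hφ.2⟩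
  simp_rw [fun t : ℝ => (h_F φ hc t).1, fun t : ℝ => (h_F φ hc t).2]
  have e1 : ∀ x : ℂ, Complex.I * x * Complex.I = -x := fun x => by
    linear_combination x * Complex.I_sq
  simp_rw [e1]
  have hr := congrArg (fun x : ℝ => Complex.I * (x : ℂ)) (h_real φ hφ)
  beta_reduce at hr
  rw [← intervalIntegral.integral_ofReal, ← intervalIntegral.integral_const_mul] at hr
  refine Eq.trans (intervalIntegral.integral_congr (fun t _ => ?_)) (hr.trans ?_)
  · beta_reduce
    rw [intervalIntegral.integral_neg, intervalIntegral.integral_mul_const,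
      intervalIntegral.integral_ofReal, intervalIntegral.integral_ofReal]
    generalize (∫ u in (0:ℝ)..t, _ : ℝ) = X
    generalize (∫ u in (0:ℝ)..t, _ : ℝ) = Y
    generalize 4*Real.sin φ*(1-t^2)/((1+t^2)^2 - 4*Real.sin φ^2*t^2) = W
    push_cast
    linear_combination (-(Complex.I*W*Y)) * Complex.I_sq
  · push_cast
    ring
end
end

section
/- The alternating multiple zeta values Li_{3,1}(1,−1) = ∑_{0<k₁<k₂} (−1)^{k₂} / (k₁³ · k₂) and Li_{1,3}(−1,1) = ∑_{0<k₁<k₂} (−1)^{k₁} / (k₁ · k₂³) satisfy Li_{3,1}(1,−1) + Li_{1,3}(−1,1) = −log(2)·ζ(3) + (7/8)·ζ(4), where ζ(4) = π⁴/90; equivalently 2·Li_{3,1}(1,−1) + 2·Li_{1,3}(−1,1) = −2·log(2)·ζ(3) + (7/4)·ζ(4). -/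
open Filter Topology

lemma icc_sum_range (f : ℕ → ℝ) (N : ℕ) :
    ∑ k ∈ Finset.Icc 1 N, f k = ∑ i ∈ Finset.range N, f (i + 1) := by
  induction N with
  | zero => simp
  | succ n ih => rw [Finset.sum_Icc_succ_top (by omega), ih, Finset.sum_range_succ]

lemma ico_sum_icc (f : ℕ → ℝ) (N : ℕ) :
    ∑ k ∈ Finset.Ico 1 (N + 1), f k = ∑ i ∈ Finset.range N, f (i + 1) := by
  rw [← icc_sum_range]
  rfl

lemma alt_even (n : ℕ) : ∑ i ∈ Finset.range (2 * n), (-1 : ℝ) ^ i * (1 / ((i : ℝ) + 1))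
    = (harmonic (2 * n) : ℝ) - (harmonic n : ℝ) := by
  induction n with
  | zero => simp
  | succ n ih =>
    rw [show 2 * (n + 1) = 2 * n + 1 + 1 by ring, Finset.sum_range_succ, Finset.sum_range_succ, ih,
      harmonic_succ, harmonic_succ, harmonic_succ]
    have h1 : (2 * (n : ℝ) + 1) ≠ 0 := by positivity
    have h2 : ((n : ℝ) + 1) ≠ 0 := by positivity
    have h3 : (2 * (n : ℝ) + 1 + 1) ≠ 0 := by positivity
    have e : (-1 : ℝ) ^ (2 * n) = 1 := by simp
    rw [pow_succ, e]
    push_cast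
    field_simp
    ring

lemma alt_lim : Tendsto (fun n : ℕ => ∑ i ∈ Finset.range n, (-1 : ℝ) ^ i * (1 / ((i : ℝ) + 1)))
    atTop (𝓝 (Real.log 2)) := by
  have ha : Antitone (fun i : ℕ => 1 / ((i : ℝ) + 1)) := by
    intro a b h
    have : (a : ℝ) ≤ b := by exact_mod_cast h
    simp only
    gcongr
  obtain ⟨l, hl⟩ := ha.tendsto_alternating_series_of_tendsto_zero
    tendsto_one_div_add_atTop_nhds_zero_nat
  have h2 : Tendsto (fun n : ℕ => 2 * n) atTop atTop :=
    tendsto_id.const_mul_atTop' (by norm_num)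
  have e1 := hl.comp h2
  have g := Real.tendsto_harmonic_sub_log
  have e2 := ((g.comp h2).sub g).add_const (Real.log 2)
  rw [sub_self, zero_add] at e2
  have e3 : l = Real.log 2 := by
    refine tendsto_nhds_unique e1 (e2.congr' ?_)
    filter_upwards [eventually_ge_atTop 1] with n hn
    have hn' : (n : ℝ) ≠ 0 := by positivity
    simp only [Function.comp]
    rw [alt_even]
    push_cast
    rw [Real.log_mul (by norm_num) hn']
    ring
  rwa [e3] at hl

lemma z3 : ∃ z : ℝ, riemannZeta 3 = (z : ℂ) ∧
    Tendsto (fun n : ℕ => ∑ i ∈ Finset.range n, 1 / ((i : ℝ) + 1) ^ 3) atTop (𝓝 z) := by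
  have hs : Summable (fun n : ℕ => 1 / (n : ℝ) ^ 3) :=
    Real.summable_one_div_nat_pow.2 (by norm_num)
  refine ⟨∑' n : ℕ, 1 / (n : ℝ) ^ 3, ?_, ?_⟩
  · have := zeta_nat_eq_tsum_of_gt_one (k := 3) (by norm_num)
    push_cast at this ⊢
    exact this
  · have h := (tendsto_add_atTop_iff_nat 1).2 hs.hasSum.tendsto_sum_nat
    refine h.congr fun n => ?_
    rw [Finset.sum_range_succ']
    simp

lemma d4 : Tendsto (fun n : ℕ => ∑ i ∈ Finset.range n, (-1 : ℝ) ^ (i + 1) / ((i : ℝ) + 1) ^ 4)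
    atTop (𝓝 (-(7 / 8) * (Real.pi ^ 4 / 90))) := by
  have h := hasSum_zeta_four
  have hs : Summable (fun n : ℕ => 1 / (n : ℝ) ^ 4) := h.summable
  have he : HasSum (fun k : ℕ => 1 / ((2 * k : ℕ) : ℝ) ^ 4) ((1 / 16) * (Real.pi ^ 4 / 90)) := by
    refine (h.mul_left (1 / 16)).congr_fun ?_ 
    intro k
    push_cast
    rw [mul_pow, one_div, one_div, one_div, mul_inv]
    norm_num
  have ho : Summable (fun k : ℕ => 1 / ((2 * k + 1 : ℕ) : ℝ) ^ 4) :=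
    hs.comp_injective (i := fun k : ℕ => 2 * k + 1) (fun a b hab => by simpa using hab)
  have hsum := (he.even_add_odd (f := fun n : ℕ => 1 / (n : ℝ) ^ 4) ho.hasSum).unique h
  have ha : HasSum (fun n : ℕ => (-1 : ℝ) ^ n / (n : ℝ) ^ 4)
      ((1 / 16) * (Real.pi ^ 4 / 90) + -∑' k : ℕ, 1 / ((2 * k + 1 : ℕ) : ℝ) ^ 4) := by
    refine HasSum.even_add_odd ?_ ?_
    · simpa using he
    · refine ho.hasSum.neg.congr_fun fun k => ?_
      rw [pow_succ, pow_mul]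
      simp [neg_div]
  have := (tendsto_add_atTop_iff_nat 1).2 ha.tendsto_sum_nat
  have e : (1 / 16) * (Real.pi ^ 4 / 90) + -∑' k : ℕ, 1 / ((2 * k + 1 : ℕ) : ℝ) ^ 4
      = (-(7 / 8) * (Real.pi ^ 4 / 90)) := by linarith
  rw [e] at this
  refine this.congr fun n => ?_
  rw [Finset.sum_range_succ']
  simp

lemma stuffle (a b : ℕ → ℝ) (N : ℕ) :
    (∑ i ∈ Finset.range N, a i) * (∑ i ∈ Finset.range N, b i) =
      (∑ i ∈ Finset.range N, ∑ j ∈ Finset.range i, a j * b i)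
      + (∑ i ∈ Finset.range N, ∑ j ∈ Finset.range i, b j * a i)
      + ∑ i ∈ Finset.range N, a i * b i := by
  induction N with
  | zero => simp
  | succ n ih =>
    simp only [Finset.sum_range_succ, ← Finset.sum_mul] at ih ⊢
    linear_combination ih

theorem stmt_18 :
    ∃ L₁ L₂ : ℝ,
      Tendsto (fun N : ℕ => ∑ k₂ ∈ Finset.Icc 1 N, ∑ k₁ ∈ Finset.Ico 1 k₂,
          (-1 : ℝ) ^ k₂ / ((k₁ : ℝ) ^ 3 * (k₂ : ℝ))) atTop (𝓝 L₁) ∧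
      Tendsto (fun N : ℕ => ∑ k₂ ∈ Finset.Icc 1 N, ∑ k₁ ∈ Finset.Ico 1 k₂,
          (-1 : ℝ) ^ k₁ / ((k₁ : ℝ) * (k₂ : ℝ) ^ 3)) atTop (𝓝 L₂) ∧
      ((L₁ : ℂ) + (L₂ : ℂ) =
        -((Real.log 2 : ℝ) : ℂ) * riemannZeta 3 + (7 / 8 : ℂ) * riemannZeta 4) ∧
      riemannZeta 4 = (Real.pi : ℂ) ^ 4 / 90 := by
  obtain ⟨z, hz, hA⟩ := z3
  let a : ℕ → ℝ := fun i => 1 / ((i : ℝ) + 1) ^ 3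
  let b : ℕ → ℝ := fun i => (-1 : ℝ) ^ (i + 1) / ((i : ℝ) + 1)
  have hB : Tendsto (fun n : ℕ => ∑ i ∈ Finset.range n, b i) atTop (𝓝 (-Real.log 2)) := by
    refine alt_lim.neg.congr fun n => ?_
    rw [← Finset.sum_neg_distrib]
    refine Finset.sum_congr rfl fun i _ => ?_
    simp only [b, pow_succ]
    ring
  have hD : Tendsto (fun n : ℕ => ∑ i ∈ Finset.range n, a i * b i) atTop
      (𝓝 (-(7 / 8) * (Real.pi ^ 4 / 90))) := by
    refine d4.congr fun n => Finset.sum_congr rfl fun i _ => ?_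
    have : ((i : ℝ) + 1) ≠ 0 := by positivity
    simp only [a, b]
    field_simp
  have hSa : Summable a := by
    have := (summable_nat_add_iff 1).2
      (Real.summable_one_div_nat_pow.2 (by norm_num : 1 < 3))
    simpa [a] using this
  obtain ⟨C, hC⟩ := hB.norm.bddAbove_range
  have hS2 : Summable (fun i => ∑ j ∈ Finset.range i, b j * a i) := by
    refine Summable.of_norm_bounded (hSa.mul_left C) fun i => ?_
    rw [← Finset.sum_mul, norm_mul]
    have h0 : 0 ≤ a i := by simp only [a]; positivity
    rw [Real.norm_of_nonneg h0]
    exact mul_le_mul_of_nonneg_right (hC ⟨i, rfl⟩) h0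
  have hT2 := hS2.hasSum.tendsto_sum_nat
  set L₂ := ∑' i, ∑ j ∈ Finset.range i, b j * a i with hL2
  have hT1 := ((hA.mul hB).sub hT2).sub hD
  refine ⟨_, L₂, hT1.congr fun N => ?_, hT2.congr fun N => ?_, ?_, riemannZeta_four⟩
  · have := stuffle a b N
    rw [icc_sum_range]
    simp only [ico_sum_icc]
    have e : ∑ i ∈ Finset.range N, ∑ j ∈ Finset.range i,
        (-1 : ℝ) ^ (i + 1) / (((j + 1 : ℕ) : ℝ) ^ 3 * ((i + 1 : ℕ) : ℝ)) =
        ∑ i ∈ Finset.range N, ∑ j ∈ Finset.range i, a j * b i := by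
      refine Finset.sum_congr rfl fun i _ => Finset.sum_congr rfl fun j _ => ?_
      simp only [a, b]
      push_cast
      field_simp
    rw [e]
    simp only [a] at this ⊢
    linarith
  · rw [icc_sum_range]
    simp only [ico_sum_icc]
    refine Finset.sum_congr rfl fun i _ => Finset.sum_congr rfl fun j _ => ?_
    simp only [a, b]
    push_cast
    field_simp
  · rw [hz, riemannZeta_four]
    push_cast
    ring
end
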